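/- arXiv:1707.06677 — 2 statements merged into one kernel-verified Lean document; each statement's English description precedes it below -/
import Mathlib

section
/- Let k ≥ 2, m ≥ 1 satisfy the conditions of the proposition, and additionally k·d^m·log₂ b − 1 ≥ (1/3) m² (log ‖u‖_∞)². Then |g(b) − p_{k,m}/q_{k,m}| ≤ 3 · 2^{C√(log₂ q_{k,m} · log₂ log₂ q_{k,m})} / q_{k,m}², where C = 2√2 + 2√(5 log ‖u‖_∞) + 2. -/
/-- The value of `g(z) = z^{-1}∏_{t≥0} P(z^{-d^t})` at an integer `b ≥ 2`. -/
noncomputable def mahlerG (d b : ℕ) (u : ℕ → ℤ) : ℝ :=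
  ((b : ℝ))⁻¹ * ∏' t : ℕ, ∑ i ∈ Finset.range d, (u i : ℝ) * (((b : ℝ))⁻¹ ^ (d ^ t)) ^ i

/-- `q_{k,m} = q_k(b^{d^m})`, where `q_k(z) = ∑_{j≤k} a_j z^j`. -/
noncomputable def mahlerQkm (d b k m : ℕ) (a : ℕ → ℤ) : ℝ :=
  ∑ j ∈ Finset.range (k + 1), (a j : ℝ) * ((b : ℝ) ^ (d ^ m)) ^ j

/-- `p_{k,m} = ∏_{t<m} P*(b^{d^t}) · p_k(b^{d^m})`, where `p_k(z) = ∑_{i<k} bc_i z^i` and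
`P*(z) = z^{d-1}P(1/z)`. -/
noncomputable def mahlerPkm (d b k m : ℕ) (u bc : ℕ → ℤ) : ℝ :=
  (∏ t ∈ Finset.range m,
      ∑ i ∈ Finset.range d, (u i : ℝ) * ((b : ℝ) ^ (d ^ t)) ^ (d - 1 - i)) *
    ∑ i ∈ Finset.range k, (bc i : ℝ) * ((b : ℝ) ^ (d ^ m)) ^ i

/-- The coefficient of `x ^ n` in `∏ P(x ^ (d ^ t))`: the product of `u` over the digits of `n`. -/
def digitCoeff (d : ℕ) (u : ℕ → ℤ) (n : ℕ) : ℤ := ((Nat.digits d n).map u).prod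

theorem digitCoeff_add_mul {d : ℕ} (hd : 2 ≤ d) {u : ℕ → ℤ} (hu0 : u 0 = 1) {i : ℕ}
    (hi : i < d) (q : ℕ) : digitCoeff d u (i + d * q) = u i * digitCoeff d u q := by
  unfold digitCoeff
  by_cases h : i ≠ 0 ∨ q ≠ 0
  · rw [Nat.digits_add d (by omega) i q hi h]
    simp
  · push Not at h
    simp [h.1, h.2, hu0]

theorem sum_range_mul_eq_sum_sum (d N : ℕ) (f : ℕ → ℝ) :
    ∑ n ∈ Finset.range (d * N), f n =
      ∑ q ∈ Finset.range N, ∑ i ∈ Finset.range d, f (i + d * q) := by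
  induction N with
  | zero => simp
  | succ N ih =>
    rw [Nat.mul_succ, Finset.sum_range_add, ih, Finset.sum_range_succ]
    simp [add_comm]

theorem prod_eq_sum_digitCoeff {d : ℕ} (hd : 2 ≤ d) {u : ℕ → ℤ} (hu0 : u 0 = 1) (N : ℕ) (x : ℝ) :
    ∏ t ∈ Finset.range N, ∑ i ∈ Finset.range d, (u i : ℝ) * (x ^ (d ^ t)) ^ i =
      ∑ n ∈ Finset.range (d ^ N), (digitCoeff d u n : ℝ) * x ^ n := by
  induction N generalizing x with
  | zero => simp [digitCoeff]
  | succ N ih =>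
    rw [Finset.prod_range_succ', pow_succ', sum_range_mul_eq_sum_sum]
    have h := ih (x ^ d)
    simp only [pow_succ', pow_mul] at h ⊢
    rw [h, Finset.sum_mul]
    refine Finset.sum_congr rfl fun q _ => ?_
    rw [Finset.mul_sum]
    refine Finset.sum_congr rfl fun i hi => ?_
    rw [digitCoeff_add_mul hd hu0 (Finset.mem_range.1 hi), pow_add, pow_mul]
    push_cast
    simp
    ring

theorem abs_digitCoeff_le_pow_length {U : ℝ} (hU1 : 1 ≤ U) {u : ℕ → ℤ}
    (hU : ∀ i, (|u i| : ℝ) ≤ U) (d n : ℕ) :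
    |(digitCoeff d u n : ℝ)| ≤ U ^ (Nat.digits d n).length := by
  unfold digitCoeff
  induction Nat.digits d n with
  | nil => simp
  | cons i l ih =>
    simp only [List.map_cons, List.prod_cons, List.length_cons, Int.cast_mul, abs_mul, pow_succ']
    exact mul_le_mul (hU i) ih (abs_nonneg _) (by linarith)

theorem abs_digitCoeff_le {d : ℕ} (hd : 2 ≤ d) {U : ℝ} (hU1 : 1 ≤ U) {u : ℕ → ℤ}
    (hU : ∀ i, (|u i| : ℝ) ≤ U) {k s n : ℕ} (hn : n ≤ 2 * k + s) :
    |(digitCoeff d u n : ℝ)| ≤ U ^ (Real.logb d (2 * k + 1) + 1) * U ^ s := by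
  refine (abs_digitCoeff_le_pow_length hU1 hU d n).trans ?_
  rw [← Real.rpow_natCast, ← Real.rpow_natCast U s, ← Real.rpow_add (by linarith)]
  refine Real.rpow_le_rpow_of_exponent_le hU1 ?_
  have hd1 : (1 : ℝ) < d := by exact_mod_cast (by omega : 1 < d)
  have hL : 0 ≤ Real.logb d (2 * k + 1) :=
    Real.logb_nonneg hd1 (by linarith [Nat.cast_nonneg (α := ℝ) k])
  rcases Nat.eq_zero_or_pos n with rfl | hn0
  · simp
    positivity
  rw [Nat.length_digits d n (by omega) hn0.ne']
  push_cast
  have hle : (n : ℝ) ≤ (2 * k + 1) * (d : ℝ) ^ s := by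
    have h1 : s < d ^ s := Nat.lt_pow_self (by omega)
    have h2 : n ≤ (2 * k + 1) * d ^ s := by nlinarith
    exact_mod_cast h2
  have h3 : Real.logb d n ≤ Real.logb d (2 * k + 1) + s := by
    have hpos : (0 : ℝ) < 2 * k + 1 := by positivity
    have := Real.logb_le_logb_of_le hd1 (by exact_mod_cast hn0) hle
    rwa [Real.logb_mul hpos.ne' (by positivity), Real.logb_pow, Real.logb_self_eq_one hd1,
      mul_one] at this
  linarith [Real.natLog_le_logb n d]

theorem summable_digitCoeff {d : ℕ} (hd : 2 ≤ d) {U : ℝ} (hU1 : 1 ≤ U) {u : ℕ → ℤ}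
    (hU : ∀ i, (|u i| : ℝ) ≤ U) {x : ℝ} (hx : 0 ≤ x) (hUx : U * x < 1) :
    Summable fun n => (digitCoeff d u n : ℝ) * x ^ n := by
  have hg := (summable_geometric_of_lt_one (by positivity) hUx).mul_left U
  refine hg.of_norm_bounded fun n => ?_
  have h := abs_digitCoeff_le hd hU1 hU (k := 0) (s := n) (n := n) (by omega)
  simp only [Nat.cast_zero, mul_zero, zero_add, Real.logb_one, Real.rpow_one] at h
  rw [Real.norm_eq_abs, abs_mul, abs_of_nonneg (pow_nonneg hx n), mul_pow, ← mul_assoc]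
  exact mul_le_mul_of_nonneg_right h (by positivity)

theorem multipliable_factors {d : ℕ} (hd : 2 ≤ d) {U : ℝ} {u : ℕ → ℤ} (hu0 : u 0 = 1)
    (hU : ∀ i, (|u i| : ℝ) ≤ U) {x : ℝ} (hx : 0 ≤ x) (hx1 : x < 1) :
    Multipliable fun t : ℕ => ∑ i ∈ Finset.range d, (u i : ℝ) * (x ^ (d ^ t)) ^ i := by
  have hU0 : 0 ≤ U := (abs_nonneg _).trans (hU 0)
  have key : Summable fun t : ℕ =>
      (∑ i ∈ Finset.range d, (u i : ℝ) * (x ^ (d ^ t)) ^ i) - 1 := by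
    refine ((summable_geometric_of_lt_one hx hx1).mul_left (d * U)).of_norm_bounded fun t => ?_
    obtain ⟨e, rfl⟩ : ∃ e, d = e + 1 := ⟨d - 1, by omega⟩
    rw [Finset.sum_range_succ', pow_zero, hu0]
    simp only [Int.cast_one, mul_one, add_sub_cancel_right]
    refine (norm_sum_le _ _).trans ?_
    have : ∀ i ∈ Finset.range e, ‖(u (i + 1) : ℝ) * (x ^ ((e + 1) ^ t)) ^ (i + 1)‖ ≤ U * x ^ t := by
      intro i _
      rw [Real.norm_eq_abs, abs_mul, ← pow_mul, abs_of_nonneg (pow_nonneg hx _)]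
      refine mul_le_mul (hU _) (pow_le_pow_of_le_one hx hx1.le ?_) (by positivity) hU0
      have : t < (e + 1) ^ t := Nat.lt_pow_self (by omega)
      nlinarith
    refine (Finset.sum_le_sum this).trans ?_
    simp only [Finset.sum_const, Finset.card_range, nsmul_eq_mul]
    push_cast
    nlinarith [mul_nonneg hU0 (pow_nonneg hx t)]
  simpa using Real.multipliable_one_add_of_summable key

theorem tprod_eq_tsum_digitCoeff {d : ℕ} (hd : 2 ≤ d) {U : ℝ} (hU1 : 1 ≤ U) {u : ℕ → ℤ}
    (hu0 : u 0 = 1) (hU : ∀ i, (|u i| : ℝ) ≤ U) {x : ℝ} (hx : 0 ≤ x) (hUx : U * x < 1) :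
    ∏' t : ℕ, ∑ i ∈ Finset.range d, (u i : ℝ) * (x ^ (d ^ t)) ^ i =
      ∑' n, (digitCoeff d u n : ℝ) * x ^ n := by
  have h1 := (multipliable_factors hd hu0 hU hx (by nlinarith)).tendsto_prod_tprod_nat
  have h2 := (summable_digitCoeff hd hU1 hU hx hUx).tendsto_sum_tsum_nat.comp
    (tendsto_pow_atTop_atTop_of_one_lt (by omega : 1 < d))
  refine tendsto_nhds_unique h1 (h2.congr fun N => ?_)
  rw [prod_eq_sum_digitCoeff hd hu0]
  rfl

/-- The functional equation of `mahlerG`, iterated `m` times. -/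
theorem mahlerG_eq_prod_mul {d b : ℕ} (hd : 2 ≤ d) (hb : 2 ≤ b) {U : ℝ} {u : ℕ → ℤ}
    (hu0 : u 0 = 1) (hU : ∀ i, (|u i| : ℝ) ≤ U) (m : ℕ) :
    mahlerG d b u =
      (∏ t ∈ Finset.range m,
        ∑ i ∈ Finset.range d, (u i : ℝ) * ((b : ℝ) ^ (d ^ t)) ^ (d - 1 - i)) *
        (((b : ℝ) ^ d ^ m)⁻¹ *
        ∏' t : ℕ, ∑ i ∈ Finset.range d, (u i : ℝ) * ((((b : ℝ) ^ d ^ m)⁻¹) ^ (d ^ t)) ^ i) := by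
  have hb1 : (1 : ℝ) < b := by exact_mod_cast (by omega : 1 < b)
  have hb0 : (b : ℝ) ≠ 0 := by positivity
  have hx1 : ((b : ℝ) ^ d ^ m)⁻¹ < 1 :=
    inv_lt_one_of_one_lt₀ (one_lt_pow₀ hb1 (by positivity))
  have hmul := multipliable_factors hd hu0 hU (x := ((b : ℝ) ^ d ^ m)⁻¹) (by positivity) hx1
  have hshift : ∀ t : ℕ, ((b : ℝ)⁻¹) ^ d ^ (t + m) = (((b : ℝ) ^ d ^ m)⁻¹) ^ (d ^ t) := by
    intro t
    rw [← inv_pow, ← pow_mul, pow_add, mul_comm]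
  have hsplit : ∏' t : ℕ, ∑ i ∈ Finset.range d, (u i : ℝ) * (((b : ℝ))⁻¹ ^ (d ^ t)) ^ i = _ :=
    (Multipliable.prod_mul_tprod_nat_mul' (k := m)
      (f := fun t : ℕ => ∑ i ∈ Finset.range d, (u i : ℝ) * (((b : ℝ))⁻¹ ^ (d ^ t)) ^ i)
      (by simpa only [hshift] using hmul)).symm
  simp only [hshift] at hsplit
  rw [mahlerG, hsplit, ← mul_assoc, ← mul_assoc]
  congr 1
  have hfac : ∀ t, ∑ i ∈ Finset.range d, (u i : ℝ) * ((b : ℝ) ^ (d ^ t)) ^ (d - 1 - i) =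
      ((b : ℝ) ^ (d ^ t)) ^ (d - 1) *
        ∑ i ∈ Finset.range d, (u i : ℝ) * (((b : ℝ))⁻¹ ^ (d ^ t)) ^ i := by
    intro t
    rw [Finset.mul_sum]
    refine Finset.sum_congr rfl fun i hi => ?_
    have hi := Finset.mem_range.1 hi
    have h : ((b : ℝ) ^ (d ^ t)) ^ (d - 1) =
        ((b : ℝ) ^ (d ^ t)) ^ (d - 1 - i) * ((b : ℝ) ^ (d ^ t)) ^ i := by
      rw [← pow_add]; congr 1; omega
    rw [h, inv_pow, inv_pow]
    field_simp
  have hpow : ∀ m : ℕ, (∏ t ∈ Finset.range m, ((b : ℝ) ^ (d ^ t)) ^ (d - 1)) *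
      ((b : ℝ) ^ d ^ m)⁻¹ = (b : ℝ)⁻¹ := by
    intro m
    induction m with
    | zero => simp
    | succ m ih =>
      rw [Finset.prod_range_succ, ← ih, mul_assoc]
      congr 1
      have h : (b : ℝ) ^ d ^ (m + 1) = ((b : ℝ) ^ d ^ m) ^ (d - 1) * (b : ℝ) ^ d ^ m := by
        rw [← pow_mul, ← pow_add, pow_succ]
        congr 1
        obtain ⟨e, rfl⟩ : ∃ e, d = e + 1 := ⟨d - 1, by omega⟩
        simp [Nat.mul_succ]
      rw [h]
      field_simp
  simp only [hfac, Finset.prod_mul_distrib]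
  rw [mul_right_comm, hpow m]

theorem abs_prod_reversed_le {d b : ℕ} (hd : 2 ≤ d) (hb : 2 ≤ b) {U : ℝ} (hU1 : 1 ≤ U)
    {u : ℕ → ℤ} (hU : ∀ i, (|u i| : ℝ) ≤ U) (m : ℕ) :
    |∏ t ∈ Finset.range m,
        ∑ i ∈ Finset.range d, (u i : ℝ) * ((b : ℝ) ^ (d ^ t)) ^ (d - 1 - i)| * b ≤
      (2 * U) ^ m * (b : ℝ) ^ d ^ m := by
  have hb2 : (2 : ℝ) ≤ b := by exact_mod_cast hb
  have hfac : ∀ t, |∑ i ∈ Finset.range d, (u i : ℝ) * ((b : ℝ) ^ (d ^ t)) ^ (d - 1 - i)| ≤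
      2 * U * ((b : ℝ) ^ (d ^ t)) ^ (d - 1) := by
    intro t
    set x := (b : ℝ) ^ (d ^ t) with hxdef
    have hx2 : 2 ≤ x := hb2.trans (le_self_pow₀ (by linarith) (by positivity))
    have h1 : |∑ i ∈ Finset.range d, (u i : ℝ) * x ^ (d - 1 - i)| ≤
        U * ∑ i ∈ Finset.range d, x ^ (d - 1 - i) := by
      rw [Finset.mul_sum]
      refine (Finset.abs_sum_le_sum_abs _ _).trans (Finset.sum_le_sum fun i _ => ?_)
      rw [abs_mul, abs_of_nonneg (by positivity : 0 ≤ x ^ (d - 1 - i))]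
      exact mul_le_mul_of_nonneg_right (hU i) (by positivity)
    rw [Finset.sum_range_reflect (fun j => x ^ j) d] at h1
    have h2 : ∑ i ∈ Finset.range d, x ^ i ≤ 2 * x ^ (d - 1) := by
      have hg := geom_sum_mul x d
      have hp : x ^ d = x ^ (d - 1) * x := by rw [← pow_succ]; congr 1; omega
      have hS : 0 ≤ ∑ i ∈ Finset.range d, x ^ i := Finset.sum_nonneg fun i _ => by positivity
      have hp0 : 0 ≤ x ^ (d - 1) := by positivity
      nlinarith
    calc _ ≤ U * ∑ i ∈ Finset.range d, x ^ i := h1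
      _ ≤ U * (2 * x ^ (d - 1)) := by gcongr
      _ = _ := by ring
  rw [Finset.abs_prod]
  induction m with
  | zero => simp
  | succ m ih =>
    rw [Finset.prod_range_succ, mul_right_comm]
    have h : (b : ℝ) ^ d ^ (m + 1) = (b : ℝ) ^ d ^ m * ((b : ℝ) ^ d ^ m) ^ (d - 1) := by
      rw [← pow_mul, ← pow_add, pow_succ]
      congr 1
      obtain ⟨e, rfl⟩ : ∃ e, d = e + 1 := ⟨d - 1, by omega⟩
      simp [Nat.mul_succ, add_comm]
    rw [h]
    calc _ ≤ ((2 * U) ^ m * (b : ℝ) ^ d ^ m) * (2 * U * ((b : ℝ) ^ (d ^ m)) ^ (d - 1)) :=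
          mul_le_mul ih (hfac m) (abs_nonneg _) (by positivity)
      _ = _ := by ring

theorem polynomial_mul_series {w a : ℕ → ℝ} {y : ℝ} (hy : y ≠ 0) (k : ℕ)
    (hs : Summable fun n => w n * y ^ n) :
    (∑ j ∈ Finset.range (k + 1), a j * (y⁻¹) ^ j) * (y * ∑' n, w n * y ^ n) =
      ∑ j ∈ Finset.range (k + 1), a j * ∑ n ∈ Finset.range j, w n * (y⁻¹) ^ (j - 1 - n) +
      ∑' i, y ^ (i + 1) * ∑ j ∈ Finset.range (k + 1), a j * w (i + j) := by
  have hshift : ∀ j, Summable fun i => y ^ (i + 1) * (a j * w (i + j)) := by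
    intro j
    have h := ((summable_nat_add_iff j).2 hs).mul_left (a j * y * (y⁻¹) ^ j)
    refine h.congr fun i => ?_
    rw [pow_add, pow_succ]
    have : (y⁻¹) ^ j * y ^ j = 1 := by rw [← mul_pow, inv_mul_cancel₀ hy, one_pow]
    linear_combination (a j * y * w (i + j) * y ^ i) * this
  have hdist : ∀ i, y ^ (i + 1) * ∑ j ∈ Finset.range (k + 1), a j * w (i + j) =
      ∑ j ∈ Finset.range (k + 1), y ^ (i + 1) * (a j * w (i + j)) := fun i => Finset.mul_sum ..
  simp only [hdist]
  rw [Summable.tsum_finsetSum fun j _ => hshift j, ← Finset.sum_add_distrib, Finset.sum_mul]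
  refine Finset.sum_congr rfl fun j _ => ?_
  rw [← hs.sum_add_tsum_nat_add j, mul_add, mul_add]
  congr 1
  · rw [Finset.mul_sum, Finset.mul_sum, Finset.mul_sum]
    refine Finset.sum_congr rfl fun n hn => ?_
    have hn := Finset.mem_range.1 hn
    have h : (y⁻¹) ^ j = (y⁻¹) ^ (j - 1 - n) * (y⁻¹) ^ n * y⁻¹ := by
      rw [← pow_add, ← pow_succ]; congr 1; omega
    rw [h]
    simp only [inv_pow]
    field_simp
  · rw [← mul_assoc, ← tsum_mul_left]
    refine tsum_congr fun i => ?_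
    rw [pow_add, pow_succ]
    have : (y⁻¹) ^ j * y ^ j = 1 := by rw [← mul_pow, inv_mul_cancel₀ hy, one_pow]
    linear_combination (a j * y * w (i + j) * y ^ i) * this

theorem log_denominator_bounds {k : ℕ} (hk : 2 ≤ k) {L l β Q : ℝ} (hl0 : 0 ≤ l) (hL0 : 0 ≤ L)
    (hQ : k * β - 1 ≤ Q)
    (hβ : 2 + Real.logb 2 (k + 1) + k / 2 * Real.logb 2 k + (k + 1) * (L + 1) * l ≤ β) :
    8 ≤ Q ∧ k * (k + 1) * (L + 1) * l ≤ Q ∧ k ^ 2 / 2 * Real.logb 2 k ≤ Q ∧ (k : ℝ) ^ 2 ≤ Q := by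
  have hk2 : (2 : ℝ) ≤ k := by exact_mod_cast hk
  set K := Real.logb 2 k with hK
  have hK1 : 1 ≤ K := by
    rw [hK, Real.le_logb_iff_rpow_le (by norm_num) (by linarith)]
    simpa using hk2
  have hk1 : 3 / 2 ≤ Real.logb 2 (k + 1) := by
    have h3 : (3 : ℝ) / 2 ≤ Real.logb 2 3 := by
      rw [div_le_iff₀ (by norm_num), mul_comm, ← Nat.cast_ofNat (R := ℝ) (n := 2),
        ← Real.logb_pow]
      rw [Real.le_logb_iff_rpow_le (by norm_num) (by norm_num)]
      norm_num
    exact h3.trans (Real.logb_le_logb_of_le (by norm_num) (by norm_num) (by linarith))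
  have hT : 0 ≤ (k + 1) * (L + 1) * l := by positivity
  have hkβ := mul_le_mul_of_nonneg_left hβ (by positivity : (0 : ℝ) ≤ k)
  have hQbase : 7 / 2 * k - 1 + k ^ 2 / 2 * K + k * (k + 1) * (L + 1) * l ≤ Q := by nlinarith
  have hkT : 0 ≤ k * (k + 1) * (L + 1) * l := by positivity
  have hQ8 : 8 ≤ Q := by nlinarith
  have hQT : k * (k + 1) * (L + 1) * l ≤ Q := by nlinarith
  have hQK : k ^ 2 / 2 * K ≤ Q := by nlinarith
  have hQk : (k : ℝ) ^ 2 ≤ Q := by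
    rcases le_or_gt 4 k with h4 | h4
    · have hK2 : 2 ≤ K := by
        rw [hK, Real.le_logb_iff_rpow_le (by norm_num) (by linarith)]
        have : (4 : ℝ) ≤ k := by exact_mod_cast h4
        norm_num
        linarith
      nlinarith
    · have h3 : (k : ℝ) ≤ 3 := by exact_mod_cast (by omega : k ≤ 3)
      nlinarith
  exact ⟨hQ8, hQT, hQK, hQk⟩

theorem exponent_bound {k m : ℕ} (hk : 2 ≤ k) {U L β Q : ℝ} (hU1 : 1 ≤ U) (hL0 : 0 ≤ L)
    (hL : L ≤ Real.logb 2 (2 * k + 1)) (hm : (2 : ℝ) ^ m ≤ β) (hQ : k * β - 1 ≤ Q)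
    (hβ : 2 + Real.logb 2 (k + 1) + k / 2 * Real.logb 2 k + (k + 1) * (L + 1) * Real.logb 2 U ≤ β)
    (hextra : 1 / 3 * (m : ℝ) ^ 2 * Real.log U ^ 2 ≤ Q) :
    m + Real.logb 2 (k + 1) + k * Real.logb 2 k + m * Real.logb 2 U +
        (2 * k + 1) * (L + 1) * Real.logb 2 U ≤
      (2 * √2 + 2 * √(5 * Real.log U) + 2) * √(Q * Real.logb 2 Q) := by
  have hk2 : (2 : ℝ) ≤ k := by exact_mod_cast hk
  have hln2 := Real.log_two_gt_d9
  set l := Real.logb 2 U with hl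
  have hlU : Real.log U = l * Real.log 2 := by
    rw [hl, Real.logb, div_mul_cancel₀ _ (by positivity)]
  have hl0 : 0 ≤ l := Real.logb_nonneg (by norm_num) hU1
  obtain ⟨hQ8, hQT, hQK, hQk⟩ := log_denominator_bounds hk hl0 hL0 hQ hβ
  set K := Real.logb 2 k with hK
  have hβQ : β ≤ Q := by
    have hβ0 : (1 : ℝ) ≤ β := (one_le_pow₀ (by norm_num)).trans hm
    have := mul_le_mul_of_nonneg_right hk2 (zero_le_one.trans hβ0)
    linarith
  have hK0 : 0 ≤ K := Real.logb_nonneg (by norm_num) (by linarith)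
  have hQ0 : 0 < Q := by linarith
  clear hQ hβ
  set ℓ := Real.logb 2 Q with hℓ
  have hℓ3 : 3 ≤ ℓ := by
    rw [hℓ, Real.le_logb_iff_rpow_le (by norm_num) hQ0]
    norm_num
    linarith
  have hℓQ : ℓ ≤ Q := by
    rw [hℓ, Real.logb_le_iff_le_rpow (by norm_num) hQ0]
    have := one_add_mul_self_le_rpow_one_add (s := 1) (by norm_num) (p := Q) (by linarith)
    norm_num at this
    linarith
  set S := √(Q * ℓ) with hS
  have hS0 : 0 ≤ S := Real.sqrt_nonneg _
  have hSS : S ^ 2 = Q * ℓ := Real.sq_sqrt (by positivity)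
  have hℓS : ℓ ≤ S := Real.le_sqrt_of_sq_le <| by
    rw [sq]
    exact mul_le_mul_of_nonneg_right hℓQ (by linarith)
  have hA : (m : ℝ) ≤ S := by
    refine le_trans ?_ hℓS
    rw [hℓ, Real.le_logb_iff_rpow_le (by norm_num) hQ0, Real.rpow_natCast]
    exact hm.trans hβQ
  have hB : m * l ≤ 3 / 2 * S := by
    refine abs_le_of_sq_le_sq' ?_ (by positivity) |>.2
    rw [hlU] at hextra
    have h2 : (0.48 : ℝ) ≤ Real.log 2 ^ 2 := by nlinarith
    have h3 := mul_le_mul_of_nonneg_left h2 (sq_nonneg (m * l))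
    have h4 := mul_le_mul_of_nonneg_left hℓ3 hQ0.le
    rw [mul_pow (3 / 2), hSS]
    linarith
  have hC : Real.logb 2 (k + 1) ≤ S :=
    (Real.logb_le_logb_of_le (by norm_num) (by linarith) (by nlinarith)).trans hℓS
  have hKℓ : 2 * K ≤ ℓ := by
    have := Real.logb_le_logb_of_le (b := 2) (by norm_num) (by positivity) hQk
    rw [Real.logb_pow] at this
    exact_mod_cast this
  have hD : k * K ≤ S := by
    refine Real.le_sqrt_of_sq_le ?_
    calc (k * K) ^ 2 = (k ^ 2 / 2 * K) * (2 * K) := by ring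
      _ ≤ Q * ℓ := by gcongr
  have hLℓ : L + 1 ≤ 2 * ℓ := by
    have h1 : Real.logb 2 (4 * k + 2) ≤ Real.logb 2 (Q ^ 2) :=
      Real.logb_le_logb_of_le (by norm_num) (by positivity) (by nlinarith)
    rw [Real.logb_pow, show (4 * k + 2 : ℝ) = (2 * k + 1) * 2 by ring,
      Real.logb_mul (by positivity) (by norm_num), Real.logb_self_eq_one (by norm_num)] at h1
    push_cast at h1
    linarith
  have hE : (2 * k + 1) * (L + 1) * l ≤ 2 * √(5 * Real.log U) * S := by
    have h5 : 0 ≤ 5 * Real.log U := by have := Real.log_nonneg hU1; positivity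
    refine abs_le_of_sq_le_sq' ?_ (by positivity) |>.2
    rw [mul_pow (2 * √(5 * Real.log U)), mul_pow 2, Real.sq_sqrt h5, hSS, hlU]
    have h1 : ((2 * k + 1) * (L + 1) * l) ^ 2 ≤
        (5 * k * (k + 1) * (L + 1) * l) * ((2 * ℓ) * l) := by
      calc ((2 * k + 1) * (L + 1) * l) ^ 2
          = ((2 * k + 1) ^ 2 * (L + 1) * l) * ((L + 1) * l) := by ring
        _ ≤ (5 * k * (k + 1) * (L + 1) * l) * ((2 * ℓ) * l) := by
          have : (2 * k + 1 : ℝ) ^ 2 ≤ 5 * k * (k + 1) := by nlinarith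
          gcongr
    calc ((2 * k + 1) * (L + 1) * l) ^ 2
        ≤ (5 * k * (k + 1) * (L + 1) * l) * ((2 * ℓ) * l) := h1
      _ = (k * (k + 1) * (L + 1) * l) * (10 * ℓ * l) := by ring
      _ ≤ Q * (10 * ℓ * l) := by gcongr
      _ ≤ Q * (20 * Real.log 2 * ℓ * l) := by gcongr; linarith
      _ = _ := by ring
  have hsqrt2 : 7 / 5 ≤ √2 := Real.le_sqrt_of_sq_le (by norm_num)
  have := mul_le_mul_of_nonneg_right hsqrt2 hS0
  linarith

theorem polynomial_value_bounds {k : ℕ} {a : ℕ → ℤ} (hak : a k ≠ 0) {H B : ℝ} (hB2 : 2 ≤ B)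
    (hH : ∀ j, (|a j| : ℝ) ≤ H) (hHB : 4 * H ≤ B) :
    B ^ k / 2 ≤ |∑ j ∈ Finset.range (k + 1), (a j : ℝ) * B ^ j| ∧
      |∑ j ∈ Finset.range (k + 1), (a j : ℝ) * B ^ j| ≤ 2 * H * B ^ k := by
  have hH0 : 0 ≤ H := (abs_nonneg _).trans (hH 0)
  have hak1 : (1 : ℝ) ≤ |(a k : ℝ)| := by exact_mod_cast Int.one_le_abs hak
  have hBk : 0 < B ^ k := by positivity
  have hlow : |∑ j ∈ Finset.range k, (a j : ℝ) * B ^ j| ≤ B ^ k / 2 ∧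
      |∑ j ∈ Finset.range k, (a j : ℝ) * B ^ j| ≤ H * B ^ k := by
    have h1 : |∑ j ∈ Finset.range k, (a j : ℝ) * B ^ j| ≤ H * ∑ j ∈ Finset.range k, B ^ j := by
      rw [Finset.mul_sum]
      refine (Finset.abs_sum_le_sum_abs _ _).trans (Finset.sum_le_sum fun j _ => ?_)
      rw [abs_mul, abs_of_nonneg (by positivity : 0 ≤ B ^ j)]
      exact mul_le_mul_of_nonneg_right (hH j) (by positivity)
    have hg := geom_sum_mul B k
    have hS : 0 ≤ ∑ j ∈ Finset.range k, B ^ j := Finset.sum_nonneg fun i _ => by positivity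
    constructor
    · nlinarith
    · refine h1.trans (mul_le_mul_of_nonneg_left ?_ hH0)
      nlinarith
  have htop : |(a k : ℝ) * B ^ k| = |(a k : ℝ)| * B ^ k := by rw [abs_mul, abs_of_pos hBk]
  have htop1 := mul_le_mul_of_nonneg_right hak1 hBk.le
  have htop2 := mul_le_mul_of_nonneg_right (hH k) hBk.le
  rw [Finset.sum_range_succ]
  constructor
  · have := abs_sub_abs_le_abs_add ((a k : ℝ) * B ^ k) (∑ j ∈ Finset.range k, (a j : ℝ) * B ^ j)
    rw [add_comm] at this
    linarith [hlow.1]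
  · have := abs_add_le (∑ j ∈ Finset.range k, (a j : ℝ) * B ^ j) ((a k : ℝ) * B ^ k)
    linarith [hlow.2]

theorem abs_denominator_mul_sub_numerator_le {d k : ℕ} (hd : 2 ≤ d) {U : ℝ} (hU1 : 1 ≤ U)
    {u : ℕ → ℤ} (hU : ∀ i, (|u i| : ℝ) ≤ U) {a bc : ℕ → ℤ} {H y : ℝ}
    (hvan : ∀ i < k, ∑ j ∈ Finset.range (k + 1), a j * digitCoeff d u (i + j) = 0)
    (hbc : ∀ i, bc i = ∑ j ∈ Finset.Icc (i + 1) k, a j * digitCoeff d u (j - i - 1))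
    (hH : ∀ j, (|a j| : ℝ) ≤ H) (hy : 0 < y) (hUy : U * y ≤ 1 / 2) :
    |(∑ j ∈ Finset.range (k + 1), (a j : ℝ) * (y⁻¹) ^ j) *
          (y * ∑' n, (digitCoeff d u n : ℝ) * y ^ n) -
        ∑ i ∈ Finset.range k, (bc i : ℝ) * (y⁻¹) ^ i| ≤
      2 * ((k + 1) * H * U ^ (Real.logb d (2 * k + 1) + 1)) * y ^ (k + 1) := by
  have hH0 : 0 ≤ H := (abs_nonneg _).trans (hH 0)
  set V := U ^ (Real.logb d (2 * k + 1) + 1) with hV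
  have hV0 : 0 ≤ V := by positivity
  have hs := summable_digitCoeff hd hU1 hU hy.le (by linarith : U * y < 1)
  have hnum : ∑ j ∈ Finset.range (k + 1), (a j : ℝ) *
        ∑ n ∈ Finset.range j, (digitCoeff d u n : ℝ) * (y⁻¹) ^ (j - 1 - n) =
      ∑ i ∈ Finset.range k, (bc i : ℝ) * (y⁻¹) ^ i := by
    have hreflect : ∀ j ∈ Finset.range (k + 1), (a j : ℝ) *
          ∑ n ∈ Finset.range j, (digitCoeff d u n : ℝ) * (y⁻¹) ^ (j - 1 - n) =
        ∑ i ∈ Finset.range j, (a j : ℝ) * ((digitCoeff d u (j - i - 1) : ℝ) * (y⁻¹) ^ i) := by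
      intro j _
      rw [← Finset.sum_range_reflect, Finset.mul_sum]
      refine Finset.sum_congr rfl fun i hi => ?_
      have hi := Finset.mem_range.1 hi
      rw [show j - 1 - (j - 1 - i) = i by omega, show j - 1 - i = j - i - 1 by omega]
    rw [Finset.sum_congr rfl hreflect,
      Finset.sum_comm' (t' := Finset.range k) (s' := fun i => Finset.Icc (i + 1) k)
        (by intro x z; simp only [Finset.mem_range, Finset.mem_Icc]; omega)]
    refine Finset.sum_congr rfl fun i _ => ?_
    rw [hbc, Int.cast_sum, Finset.sum_mul]
    refine Finset.sum_congr rfl fun j _ => ?_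
    push_cast
    ring
  rw [polynomial_mul_series hy.ne' k hs, hnum, add_sub_cancel_left]
  set f : ℕ → ℝ := fun i => y ^ (i + 1) *
    ∑ j ∈ Finset.range (k + 1), (a j : ℝ) * (digitCoeff d u (i + j) : ℝ) with hf
  have hf0 : ∀ i ∈ Finset.range k, f i = 0 := by
    intro i hi
    have := hvan i (Finset.mem_range.1 hi)
    have h : (∑ j ∈ Finset.range (k + 1), (a j : ℝ) * (digitCoeff d u (i + j) : ℝ)) = 0 := by
      exact_mod_cast this
    simp [hf, h]
  have hbound : ∀ s, ‖f (s + k)‖ ≤ ((k + 1) * H * V * y ^ (k + 1)) * (U * y) ^ s := by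
    intro s
    have h1 : |∑ j ∈ Finset.range (k + 1), (a j : ℝ) * (digitCoeff d u (s + k + j) : ℝ)| ≤
        (k + 1) * (H * (V * U ^ s)) := by
      refine (Finset.abs_sum_le_sum_abs _ _).trans ?_
      have h2 : ∀ j ∈ Finset.range (k + 1),
          |(a j : ℝ) * (digitCoeff d u (s + k + j) : ℝ)| ≤ H * (V * U ^ s) := by
        intro j hj
        have hj := Finset.mem_range.1 hj
        rw [abs_mul]
        exact mul_le_mul (hH j) (abs_digitCoeff_le hd hU1 hU (by omega)) (abs_nonneg _) hH0
      refine (Finset.sum_le_sum h2).trans ?_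
      simp
    rw [hf, Real.norm_eq_abs, abs_mul, abs_of_pos (by positivity : 0 < y ^ (s + k + 1))]
    refine (mul_le_mul_of_nonneg_left h1 (by positivity)).trans (le_of_eq ?_)
    rw [mul_pow]
    ring
  have hUy0 : 0 ≤ U * y := by positivity
  have hgeom := (hasSum_geometric_of_lt_one hUy0 (by linarith)).mul_left
    ((k + 1) * H * V * y ^ (k + 1))
  have hfs : Summable f := (summable_nat_add_iff k).1 (hgeom.summable.of_norm_bounded hbound)
  rw [← hfs.sum_add_tsum_nat_add k, Finset.sum_eq_zero hf0, zero_add]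
  refine (tsum_of_norm_bounded hgeom hbound).trans ?_
  have hinv : (1 - U * y)⁻¹ ≤ 2 := by
    rw [inv_le_comm₀ (by linarith) (by norm_num)]
    linarith
  calc (k + 1) * H * V * y ^ (k + 1) * (1 - U * y)⁻¹ ≤ (k + 1) * H * V * y ^ (k + 1) * 2 := by
        gcongr
    _ = _ := by ring

/-- (Proposition 1, final estimate.)  Same setup as the two-sided bounds: `d ≥ 2`,
`P(z) = 1 + u_1 z + ⋯ + u_{d-1}z^{d-1} ∈ ℤ[z]`, `g(z) = z^{-1}∏ P(z^{-d^t})` badly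
approximable, `b ≥ 2`, `k ≥ 2`, `m ≥ 1`, with
`b^{d^m} ≥ 4(k+1)k^{k/2}U^{(k+1)(log_d(2k+1)+1)}`.  If additionally
`k·d^m·log₂ b - 1 ≥ (1/3) m² (log U)²`, then
`|g(b) - p_{k,m}/q_{k,m}| ≤ 3 · 2^{C √(log₂ q_{k,m} · log₂ log₂ q_{k,m})} / q_{k,m}²`,
where `C = 2√2 + 2√(5 log U) + 2`. -/
theorem mahler_approximation_refined_upper_bound
    (d b k m : ℕ) (hd : 2 ≤ d) (hb : 2 ≤ b) (hk : 2 ≤ k) (hm : 1 ≤ m)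
    (u : ℕ → ℤ) (hu0 : u 0 = 1) (hud : ∀ i, d ≤ i → u i = 0)
    (U : ℝ) (hU1 : 1 ≤ U) (hU : ∀ i, (|u i| : ℝ) ≤ U)
    (c : ℕ → ℤ) (hc : ∀ n : ℕ, c n = ((Nat.digits d (n - 1)).map u).prod)
    (a bc : ℕ → ℤ) (hak : a k ≠ 0)
    (hvan : ∀ i : ℕ, 1 ≤ i → i ≤ k →
      ∑ j ∈ Finset.range (k + 1), a j * c (i + j) = 0)
    (hα : ∑ j ∈ Finset.range (k + 1), a j * c (k + 1 + j) ≠ 0)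
    (hbc : ∀ i : ℕ, bc i = ∑ j ∈ Finset.Icc (i + 1) k, a j * c (j - i))
    (hah : ∀ j : ℕ, (|a j| : ℝ) ≤
      U ^ ((k : ℝ) * (Real.logb d (2 * k + 1) + 1)) * (k : ℝ) ^ ((k : ℝ) / 2))
    (hbig : (b : ℝ) ^ (d ^ m) ≥
      4 * (k + 1) * (k : ℝ) ^ ((k : ℝ) / 2) *
        U ^ ((k + 1) * (Real.logb d (2 * k + 1) + 1)))
    (hextra : (k : ℝ) * (d : ℝ) ^ m * Real.logb 2 b - 1 ≥
      (1 / 3) * (m : ℝ) ^ 2 * (Real.log U) ^ 2) :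
    |mahlerG d b u - mahlerPkm d b k m u bc / mahlerQkm d b k m a| ≤
      3 * (2 : ℝ) ^ ((2 * Real.sqrt 2 + 2 * Real.sqrt (5 * Real.log U) + 2) *
          Real.sqrt (Real.logb 2 (mahlerQkm d b k m a) *
            Real.logb 2 (Real.logb 2 (mahlerQkm d b k m a)))) /
      (mahlerQkm d b k m a) ^ 2 := by
  set L := Real.logb d (2 * k + 1) with hL
  set B : ℝ := (b : ℝ) ^ d ^ m with hB
  set H : ℝ := U ^ ((k : ℝ) * (L + 1)) * (k : ℝ) ^ ((k : ℝ) / 2) with hHdef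
  set V : ℝ := U ^ (L + 1) with hV
  set q := mahlerQkm d b k m a with hq
  have hU0 : 0 < U := by linarith
  have hk2 : (2 : ℝ) ≤ k := by exact_mod_cast hk
  have hk0 : (0 : ℝ) < k := by linarith
  have hb2 : (2 : ℝ) ≤ b := by exact_mod_cast hb
  have hd2 : (2 : ℝ) ≤ d := by exact_mod_cast hd
  have hL0 : 0 ≤ L := Real.logb_nonneg (by linarith) (by linarith)
  have hB2 : 2 ≤ B := hb2.trans (le_self_pow₀ (by linarith) (by positivity))
  have hB0 : 0 < B := by linarith
  have hH1 : 1 ≤ H := one_le_mul_of_one_le_of_one_le (Real.one_le_rpow hU1 (by positivity))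
    (Real.one_le_rpow (by linarith) (by positivity))
  have hVU : U ≤ V := by
    conv_lhs => rw [← Real.rpow_one U]
    exact Real.rpow_le_rpow_of_exponent_le hU1 (by linarith)
  have hBV : 4 * (k + 1) * (H * V) ≤ B := by
    refine le_trans (le_of_eq ?_) hbig
    rw [show ((k : ℝ) + 1) * (L + 1) = k * (L + 1) + (L + 1) by ring, Real.rpow_add hU0]
    ring
  have hHV : H * V ≤ B / 12 := by
    have : 0 ≤ H * V := by positivity
    nlinarith
  have hHB : 4 * H ≤ B := by nlinarith
  have hUB : U ≤ B / 2 := by nlinarith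
  have hUy : U * B⁻¹ ≤ 1 / 2 := by
    rw [← div_eq_mul_inv, div_le_iff₀ hB0]
    linarith
  have hcw : ∀ n, c (n + 1) = digitCoeff d u n := fun n => by rw [hc]; rfl
  have hqval : q = ∑ j ∈ Finset.range (k + 1), (a j : ℝ) * B ^ j := rfl
  obtain ⟨hqlow, hqup⟩ := polynomial_value_bounds hak hB2 hah hHB
  rw [← hqval] at hqlow hqup
  have hq0 : 0 < |q| := lt_of_lt_of_le (by positivity) hqlow
  have hrem := abs_denominator_mul_sub_numerator_le (k := k) (a := a) (bc := bc) (y := B⁻¹)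
    hd hU1 hU (fun i hi => by
      rw [← hvan (i + 1) (by omega) (by omega)]
      refine Finset.sum_congr rfl fun j _ => ?_
      rw [← hcw, add_right_comm])
    (fun i => by
      rw [hbc]
      refine Finset.sum_congr rfl fun j hj => ?_
      have hj := (Finset.mem_Icc.1 hj).1
      rw [← hcw, Nat.sub_add_cancel (by omega)])
    hah (by positivity) hUy
  rw [inv_inv, ← hqval, ← tprod_eq_tsum_digitCoeff hd hU1 hu0 hU (by positivity) (by linarith)]
    at hrem
  have hprod := abs_prod_reversed_le hd hb hU1 hU m
  rw [mahlerG_eq_prod_mul hd hb hu0 hU m, mahlerPkm, mul_div_assoc, ← mul_sub]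
  set P := ∏ t ∈ Finset.range m,
    ∑ i ∈ Finset.range d, (u i : ℝ) * ((b : ℝ) ^ (d ^ t)) ^ (d - 1 - i)
  set g := B⁻¹ * ∏' t : ℕ, ∑ i ∈ Finset.range d, (u i : ℝ) * (B⁻¹ ^ (d ^ t)) ^ i
  set p := ∑ i ∈ Finset.range k, (bc i : ℝ) * B ^ i
  have hcrude : |P * (g - p / q)| ≤ 2 * ((2 * U) ^ m * (k + 1) * H ^ 2 * V) / q ^ 2 := by
    have hgq : |g - p / q| = |q * g - p| / |q| := by
      rw [← abs_div]
      congr 1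
      field_simp [abs_pos.1 hq0]
    have hP2 : |P| * 2 ≤ (2 * U) ^ m * B :=
      (mul_le_mul_of_nonneg_left hb2 (abs_nonneg P)).trans hprod
    have hBk : (B⁻¹) ^ k ≤ 2 * H / |q| := by
      rw [inv_pow, inv_eq_one_div, div_le_div_iff₀ (by positivity) hq0]
      linarith
    have hBB : B * (B⁻¹) ^ (k + 1) = (B⁻¹) ^ k := by
      rw [pow_succ, mul_comm, mul_assoc, inv_mul_cancel₀ hB0.ne', mul_one]
    calc |P * (g - p / q)| = |P| * |q * g - p| / |q| := by rw [abs_mul, hgq, mul_div_assoc]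
      _ ≤ |P| * (2 * ((k + 1) * H * V) * (B⁻¹) ^ (k + 1)) / |q| := by gcongr
      _ = (|P| * 2) * ((k + 1) * H * V * (B⁻¹) ^ (k + 1)) / |q| := by ring
      _ ≤ ((2 * U) ^ m * B) * ((k + 1) * H * V * (B⁻¹) ^ (k + 1)) / |q| := by gcongr
      _ = (2 * U) ^ m * ((k + 1) * H * V) * (B * (B⁻¹) ^ (k + 1)) / |q| := by ring
      _ ≤ (2 * U) ^ m * ((k + 1) * H * V) * (2 * H / |q|) / |q| := by rw [hBB]; gcongr
      _ = 2 * ((2 * U) ^ m * (k + 1) * H ^ 2 * V) / |q| ^ 2 := by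
        field_simp
      _ = _ := by rw [sq_abs]
  have hlogB : Real.logb 2 B = (d : ℝ) ^ m * Real.logb 2 b := by
    rw [hB, Real.logb_pow]
    push_cast
    rfl
  have hlogb1 : 1 ≤ Real.logb 2 b := by
    rw [Real.le_logb_iff_rpow_le (by norm_num) (by linarith)]
    simpa using hb2
  have hQ : k * Real.logb 2 B - 1 ≤ Real.logb 2 q := by
    rw [← Real.logb_abs 2 q]
    refine le_trans (le_of_eq ?_) (Real.logb_le_logb_of_le (by norm_num) (by positivity) hqlow)
    rw [Real.logb_div (by positivity) (by norm_num), Real.logb_pow 2 B k,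
      Real.logb_self_eq_one (by norm_num)]
  have hm2 : (2 : ℝ) ^ m ≤ Real.logb 2 B := by
    rw [hlogB]
    calc (2 : ℝ) ^ m ≤ (d : ℝ) ^ m := by gcongr
      _ ≤ (d : ℝ) ^ m * Real.logb 2 b := le_mul_of_one_le_right (by positivity) hlogb1
  have hLle : L ≤ Real.logb 2 (2 * k + 1) := by
    rw [hL, Real.logb, Real.logb]
    have : Real.log 2 ≤ Real.log d := Real.log_le_log (by norm_num) hd2
    have : 0 ≤ Real.log (2 * k + 1) := Real.log_nonneg (by linarith)
    have : 0 < Real.log 2 := Real.log_pos (by norm_num)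
    gcongr
  have hlogbig : 2 + Real.logb 2 (k + 1) + k / 2 * Real.logb 2 k +
      (k + 1) * (L + 1) * Real.logb 2 U ≤ Real.logb 2 B := by
    refine le_trans (le_of_eq ?_)
      (Real.logb_le_logb_of_le (b := 2) (by norm_num) (by positivity) hbig)
    rw [Real.logb_mul (by positivity) (by positivity), Real.logb_mul (by positivity) (by positivity),
      Real.logb_mul (by norm_num) (by positivity), Real.logb_rpow_eq_mul_logb_of_pos hk0,
      Real.logb_rpow_eq_mul_logb_of_pos hU0, show (4 : ℝ) = 2 ^ 2 by norm_num, Real.logb_pow,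
      Real.logb_self_eq_one (by norm_num)]
    norm_num
  have hexp := exponent_bound hk hU1 hL0 hLle hm2 hQ hlogbig
    (by rw [hlogB, ← mul_assoc] at hQ; linarith)
  refine hcrude.trans ?_
  gcongr
  · norm_num
  · rw [← Real.logb_le_iff_le_rpow (by norm_num) (by positivity)]
    refine le_trans (le_of_eq ?_) hexp
    rw [Real.logb_mul (by positivity) (by positivity), Real.logb_mul (by positivity) (by positivity),
      Real.logb_mul (by positivity) (by positivity), Real.logb_pow, Real.logb_pow,
      Real.logb_mul (by norm_num) hU0.ne', hHdef, hV,
      Real.logb_mul (by positivity) (by positivity), Real.logb_rpow_eq_mul_logb_of_pos hk0,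
      Real.logb_rpow_eq_mul_logb_of_pos hU0, Real.logb_rpow_eq_mul_logb_of_pos hU0,
      Real.logb_self_eq_one (by norm_num)]
    push_cast
    ring
end

section
/- Let d ≥ 2 and f(z) = ∏_{t=0}^∞ P(z^{-d^t}) with P ∈ ℤ[z], P(0) = 1, deg P < d, such that the Laurent series f(z) is badly approximable (all partial quotients of its continued fraction in ℚ((z^{-1})) have degree 1). Then for any integer b with |b| ≥ 2, either f(b) = 0 or there exists K > 0 such that the inequality |f(b) − p/q| < q^{-2} exp(−K√(log q · log log q)) has only finitely many rational solutions p/q. -/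
open Filter Topology Finset

/-- The product of `u` over the base-`d` digits of `n`: the `n`-th coefficient of
`∏ P(x ^ d ^ t)`, where `u` lists the coefficients of `P`. -/
def digitProd (d : ℕ) (u : ℕ → ℤ) (n : ℕ) : ℤ := ((Nat.digits d n).map u).prod

theorem digitProd_zero (d : ℕ) (u : ℕ → ℤ) : digitProd d u 0 = 1 := by
  simp [digitProd]

theorem digitProd_add_mul {d : ℕ} (hd : 2 ≤ d) {u : ℕ → ℤ} (hu0 : u 0 = 1) {r : ℕ} (hr : r < d)
    (m : ℕ) : digitProd d u (r + d * m) = u r * digitProd d u m := by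
  by_cases h : r ≠ 0 ∨ m ≠ 0
  · simp [digitProd, Nat.digits_add d (by lia) r m hr h]
  · push Not at h
    simp [h.1, h.2, hu0, digitProd]

theorem exists_abs_digitProd_le {d : ℕ} (hd : 2 ≤ d) {u : ℕ → ℤ} (hu0 : u 0 = 1) :
    ∃ γ : ℕ, ∀ n, |(digitProd d u n : ℝ)| ≤ ((n : ℝ) + 1) ^ γ := by
  obtain ⟨γ, hγ⟩ : ∃ γ : ℕ, ∀ r < d, |(u r : ℝ)| ≤ 2 ^ γ := by
    have h := pow_unbounded_of_one_lt (∑ r ∈ range d, |(u r : ℝ)|) (one_lt_two)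
    obtain ⟨γ, hγ⟩ := h
    refine ⟨γ, fun r hr => le_trans ?_ hγ.le⟩
    exact single_le_sum (f := fun r => |(u r : ℝ)|) (fun i _ => abs_nonneg _) (mem_range.2 hr)
  refine ⟨γ, fun n => ?_⟩
  induction n using Nat.strong_induction_on with
  | _ n ih =>
    rcases Nat.eq_zero_or_pos n with rfl | hn
    · simp [digitProd_zero]
    have hr : n % d < d := Nat.mod_lt _ (by lia)
    have hm : n / d < n := Nat.div_lt_self hn (by lia)
    have hn' : n % d + d * (n / d) = n := Nat.mod_add_div n d
    generalize n % d = r at *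
    generalize n / d = m at *
    have key : digitProd d u n = u r * digitProd d u m := by
      rw [← hn', digitProd_add_mul hd hu0 hr]
    rw [key]
    push_cast
    rw [abs_mul]
    rcases Nat.eq_zero_or_pos r with rfl | hr0
    · simp only [hu0, Int.cast_one, abs_one, one_mul]
      refine (ih m hm).trans ?_
      gcongr
    · have h1 : (2 : ℝ) * (m + 1) ≤ n + 1 := by
        have : 2 * (m + 1) ≤ n + 1 := by nlinarith
        exact_mod_cast this
      calc |(u r : ℝ)| * |(digitProd d u m : ℝ)| ≤ 2 ^ γ * ((m : ℝ) + 1) ^ γ := by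
            gcongr
            · exact hγ r hr
            · exact ih m hm
        _ = (2 * ((m : ℝ) + 1)) ^ γ := by rw [mul_pow]
        _ ≤ _ := by gcongr

theorem sum_range_mul_eq {M : Type*} [AddCommMonoid M] (a d : ℕ) (f : ℕ → M) :
    ∑ n ∈ range (d * a), f n = ∑ m ∈ range a, ∑ r ∈ range d, f (r + d * m) := by
  induction a with
  | zero => simp
  | succ a ih =>
    rw [Nat.mul_succ, sum_range_add, ih, sum_range_succ]
    simp only [add_comm]

/-- The finite products `∏_{t < T} P(x ^ d ^ t)` are partial sums of the power series. -/
theorem prod_eq_sum_digitProd {d : ℕ} (hd : 2 ≤ d) {u : ℕ → ℤ} (hu0 : u 0 = 1) (T : ℕ) (x : ℝ) :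
    ∏ t ∈ range T, ∑ i ∈ range d, (u i : ℝ) * (x ^ (d ^ t)) ^ i =
      ∑ n ∈ range (d ^ T), (digitProd d u n : ℝ) * x ^ n := by
  induction T generalizing x with
  | zero => simp [digitProd_zero]
  | succ T ih =>
    have h1 : ∀ t, x ^ d ^ (t + 1) = (x ^ d) ^ d ^ t := fun t => by
      rw [← pow_mul, pow_succ']
    rw [prod_range_succ', pow_succ', sum_range_mul_eq]
    simp only [h1]
    rw [ih, sum_mul]
    refine sum_congr rfl fun m _ => ?_
    rw [mul_sum]
    refine sum_congr rfl fun r hr => ?_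
    rw [digitProd_add_mul hd hu0 (mem_range.1 hr)]
    push_cast
    ring

/-- A short integer vector giving the denominator of the `k`-th Padé approximant. -/
theorem exists_pade_vector {c : ℕ → ℤ} {γ : ℕ} (hc : ∀ n, |(c n : ℝ)| ≤ ((n : ℝ) + 1) ^ γ)
    (hH : ∀ n : ℕ, (Matrix.of fun i j : Fin n => ((c (i.1 + j.1) : ℤ) : ℚ)).det ≠ 0)
    {k : ℕ} (hk : 0 < k) :
    ∃ v : ℕ → ℤ, (∀ j ≤ k, |(v j : ℝ)| ≤ (2 * (k : ℝ) + 2) ^ ((γ + 1) * k)) ∧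
      (∀ n < k, ∑ j ∈ range (k + 1), v j * c (n + j) = 0) ∧ v k ≠ 0 ∧
      ∑ j ∈ range (k + 1), v j * c (k + j) ≠ 0 := by
  have hker : ∀ (n : ℕ) (w : ℕ → ℤ), (∀ i < n, ∑ j ∈ range n, w j * c (i + j) = 0) →
      ∀ j < n, w j = 0 := by
    intro n w hw j hj
    have := mt Matrix.exists_mulVec_eq_zero_iff.1 (hH n)
    push Not at this
    have h2 : (fun j : Fin n => ((w j : ℤ) : ℚ)) = 0 := by
      by_contra hne
      refine this _ hne ?_
      ext i
      have := hw i i.2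
      rw [← Fin.sum_univ_eq_sum_range (fun j => w j * c (i + j))] at this
      simp only [Matrix.mulVec, dotProduct, Matrix.of_apply, Pi.zero_apply]
      have h3 : ((∑ j : Fin n, w j * c (i + j) : ℤ) : ℚ) = 0 := by rw [this]; simp
      push_cast at h3
      rw [← h3]
      exact sum_congr rfl fun _ _ => mul_comm _ _
    have h3 := congrFun h2 ⟨j, hj⟩
    simpa using h3
  let := Matrix.seminormedAddCommGroup (m := Fin k) (n := Fin (k + 1)) (α := ℤ)
  let A : Matrix (Fin k) (Fin (k + 1)) ℤ := Matrix.of fun i j => c (i.1 + j.1)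
  obtain ⟨t, ht0, hAt, ht⟩ := Int.Matrix.exists_ne_zero_int_vec_norm_le A (by simp) (by simpa)
  let v : ℕ → ℤ := fun j => if h : j < k + 1 then t ⟨j, h⟩ else 0
  have hvt : ∀ j : Fin (k + 1), v j = t j := fun j => by simp [v, j.2, -Order.lt_add_one_iff]
  have hv : ∀ n < k, ∑ j ∈ range (k + 1), v j * c (n + j) = 0 := by
    intro n hn
    have := congrFun hAt ⟨n, hn⟩
    rw [← Fin.sum_univ_eq_sum_range (fun j => v j * c (n + j))]
    simp only [hvt]
    simpa [Matrix.mulVec, dotProduct, A, mul_comm] using this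
  have hv0 : ∃ j < k + 1, v j ≠ 0 := by
    by_contra! h
    apply ht0
    ext j
    rw [← hvt]
    exact h j j.2
  refine ⟨v, ?_, hv, ?_, ?_⟩
  · intro j hj
    have h1 : |(v j : ℝ)| ≤ ‖t‖ := by
      have := norm_le_pi_norm t ⟨j, by lia⟩
      rw [← hvt, Int.norm_eq_abs] at this
      simpa using this
    refine h1.trans (ht.trans ?_)
    simp only [Fintype.card_fin, Nat.cast_add, Nat.cast_one, add_sub_cancel_left, div_one,
      Real.rpow_natCast]
    rw [pow_mul]
    have hA : max 1 ‖A‖ ≤ (2 * (k : ℝ) + 2) ^ γ := by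
      have hbase : (1 : ℝ) ≤ 2 * k + 2 := by linarith [(Nat.cast_nonneg k : (0 : ℝ) ≤ k)]
      refine max_le (one_le_pow₀ hbase) ((Matrix.norm_le_iff (by positivity)).2 fun i j => ?_)
      rw [Int.norm_eq_abs]
      refine (hc _).trans ?_
      have : ((i.1 + j.1 : ℕ) : ℝ) + 1 ≤ 2 * k + 2 := by
        have := i.2
        have := j.2
        norm_cast
        lia
      gcongr
    gcongr
    calc ((k : ℝ) + 1) * max 1 ‖A‖ ≤ (2 * k + 2) * (2 * (k : ℝ) + 2) ^ γ := by
          gcongr <;> linarith [(Nat.cast_nonneg k : (0 : ℝ) ≤ k)]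
      _ = _ := by rw [pow_succ']
  · intro h
    obtain ⟨j, hj, hj0⟩ := hv0
    have h1 := hker k v (fun i hi => by
      have := hv i hi
      rwa [sum_range_succ, h, zero_mul, add_zero] at this)
    rcases Nat.lt_succ_iff_lt_or_eq.1 hj with h2 | rfl
    · exact hj0 (h1 j h2)
    · exact hj0 h
  · intro h
    obtain ⟨j, hj, hj0⟩ := hv0
    refine hj0 (hker (k + 1) v (fun i hi => ?_) j hj)
    rcases Nat.lt_succ_iff_lt_or_eq.1 hi with h2 | rfl
    · exact hv i h2
    · exact h

theorem summable_add_one_pow_mul_geometric (γ : ℕ) :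
    Summable fun n : ℕ => ((n : ℝ) + 1) ^ γ * (1 / 2) ^ n := by
  have h := (summable_nat_add_iff 1).2
    (summable_pow_mul_geometric_of_norm_lt_one γ (r := (1 / 2 : ℝ)) (by norm_num))
  refine (h.mul_left 2).congr fun n => ?_
  push_cast
  ring

theorem one_le_tsum_add_one_pow_mul_geometric (γ : ℕ) :
    1 ≤ ∑' n : ℕ, ((n : ℝ) + 1) ^ γ * (1 / 2) ^ n := by
  have := (summable_add_one_pow_mul_geometric γ).le_tsum 0 (fun _ _ => by positivity)
  simp only [CharP.cast_eq_zero, zero_add, one_pow, pow_zero, mul_one] at this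
  exact this

theorem summable_and_abs_tsum_le {γ : ℕ} {a : ℕ → ℝ} {D y : ℝ} (hy : |y| ≤ 1 / 2)
    (ha : ∀ n, |a n| ≤ D * ((n : ℝ) + 1) ^ γ) :
    (Summable fun n => a n * y ^ n) ∧
      |∑' n, a n * y ^ n| ≤ D * ∑' n : ℕ, ((n : ℝ) + 1) ^ γ * (1 / 2) ^ n := by
  have hs := (summable_add_one_pow_mul_geometric γ).mul_left D
  have hb : ∀ n, ‖a n * y ^ n‖ ≤ D * (((n : ℝ) + 1) ^ γ * (1 / 2) ^ n) := fun n => by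
    rw [Real.norm_eq_abs, abs_mul, abs_pow, ← mul_assoc]
    have := (abs_nonneg _).trans (ha n)
    gcongr
    exact ha n
  refine ⟨.of_norm_bounded hs hb, ?_⟩
  rw [← tsum_mul_left]
  exact tsum_of_norm_bounded hs.hasSum hb

theorem abs_sum_mul_pow_bounds {v : ℕ → ℝ} {V B : ℝ} {k : ℕ} (hV1 : 1 ≤ V) (hB : 4 * V ≤ |B|)
    (hvV : ∀ j ≤ k, |v j| ≤ V) (hvk1 : 1 ≤ |v k|) :
    |B| ^ k / 2 ≤ |∑ j ∈ range (k + 1), v j * B ^ j| ∧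
      |∑ j ∈ range (k + 1), v j * B ^ j| ≤ 2 * V * |B| ^ k := by
  set β := |B| with hβ
  have hβ0 : 0 < β := by linarith
  constructor
  · have hlow : |∑ j ∈ range k, v j * B ^ j| ≤ β ^ k / 2 := by
      have h1 : |∑ j ∈ range k, v j * B ^ j| ≤ ∑ j ∈ range k, V * β ^ j := by
        refine (abs_sum_le_sum_abs _ _).trans (sum_le_sum fun j hj => ?_)
        rw [abs_mul, abs_pow]
        gcongr
        exact hvV j (mem_range.1 hj).le
      rw [← mul_sum] at h1
      have h2 := geom_sum_mul β k
      have h3 : 0 ≤ ∑ j ∈ range k, β ^ j := by positivity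
      have h4 : 2 * V ≤ β - 1 := by linarith
      nlinarith
    rw [sum_range_succ]
    have h5 : β ^ k ≤ |v k * B ^ k| := by
      rw [abs_mul, abs_pow]
      exact le_mul_of_one_le_left (by positivity) hvk1
    have h6 := abs_sub_abs_le_abs_add (v k * B ^ k)
      (∑ j ∈ range k, v j * B ^ j)
    rw [add_comm]
    linarith
  · have h1 : |∑ j ∈ range (k + 1), v j * B ^ j| ≤
        ∑ j ∈ range (k + 1), V * β ^ j := by
      refine (abs_sum_le_sum_abs _ _).trans (sum_le_sum fun j hj => ?_)
      rw [abs_mul, abs_pow]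
      gcongr
      exact hvV j (Nat.lt_succ_iff.1 (mem_range.1 hj))
    rw [← mul_sum] at h1
    have h2 := geom_sum_mul β (k + 1)
    have h3 : 0 ≤ ∑ j ∈ range (k + 1), β ^ j := by positivity
    have h4 : ∑ j ∈ range (k + 1), β ^ j ≤ 2 * β ^ k := by
      rw [pow_succ] at h2
      have : 0 < β ^ k := by positivity
      nlinarith
    refine h1.trans ?_
    have : 0 < β ^ k := by positivity
    nlinarith

/-- Evaluating the `k`-th Padé approximant of `∑ c_n y ^ n` at `y = 1 / B`. -/
theorem exists_pade_value {c : ℕ → ℤ} {γ : ℕ} (hc : ∀ n, |(c n : ℝ)| ≤ ((n : ℝ) + 1) ^ γ)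
    (hH : ∀ n : ℕ, (Matrix.of fun i j : Fin n => ((c (i.1 + j.1) : ℤ) : ℚ)).det ≠ 0)
    {k : ℕ} (hk : 0 < k) {W : ℝ}
    (hW : (∑' n : ℕ, ((n : ℝ) + 1) ^ γ * (1 / 2) ^ n) *
      (2 * (k : ℝ) + 2) ^ ((γ + 1) * (k + 1)) ≤ W)
    {B : ℤ} (hB : 4 * W ≤ |(B : ℝ)|) :
    ∃ (Q P : ℤ) (ε : ℝ), Q * ∑' n, (c n : ℝ) * ((B : ℝ)⁻¹) ^ n - B * P = ε ∧
      |(B : ℝ)| ^ k / 2 ≤ |(Q : ℝ)| ∧ |(Q : ℝ)| ≤ 2 * W * |(B : ℝ)| ^ k ∧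
      (|(B : ℝ)| ^ k)⁻¹ / 2 ≤ |ε| ∧ |ε| ≤ W * (|(B : ℝ)| ^ k)⁻¹ := by
  set S := ∑' n : ℕ, ((n : ℝ) + 1) ^ γ * (1 / 2) ^ n with hS
  have hS1 : 1 ≤ S := one_le_tsum_add_one_pow_mul_geometric γ
  obtain ⟨v, hvV, hv, hvk, hrk⟩ := exists_pade_vector hc hH hk
  set V : ℝ := (2 * (k : ℝ) + 2) ^ ((γ + 1) * k) with hV
  have hV1 : 1 ≤ V := one_le_pow₀ (by linarith [(Nat.cast_nonneg k : (0 : ℝ) ≤ k)])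
  set D : ℝ := ((k : ℝ) + 1) * V * (2 * (k : ℝ) + 2) ^ γ with hD
  have hDW : D * S ≤ W := by
    refine le_trans ?_ hW
    have : D ≤ (2 * (k : ℝ) + 2) ^ ((γ + 1) * (k + 1)) := by
      calc D ≤ (2 * (k : ℝ) + 2) * V * (2 * (k : ℝ) + 2) ^ γ := by
            rw [hD]
            gcongr <;> linarith [(Nat.cast_nonneg k : (0 : ℝ) ≤ k)]
        _ = _ := by rw [hV]; ring
    rw [mul_comm]
    gcongr
  have hVD : V ≤ D := by
    rw [hD]
    have h1 : (1 : ℝ) ≤ (2 * (k : ℝ) + 2) ^ γ :=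
      one_le_pow₀ (by linarith [(Nat.cast_nonneg k : (0 : ℝ) ≤ k)])
    have h2 : (1 : ℝ) ≤ (k : ℝ) + 1 := by linarith [(Nat.cast_nonneg k : (0 : ℝ) ≤ k)]
    have h3 : V * 1 ≤ ((k : ℝ) + 1) * V := by nlinarith
    nlinarith
  have hVW : V ≤ W := by nlinarith
  have hW1 : 1 ≤ W := hV1.trans hVW
  set β := |(B : ℝ)| with hβ
  have hβ4 : 4 ≤ β := by linarith
  have hβ0 : 0 < β := by linarith
  have hB0 : (B : ℝ) ≠ 0 := abs_pos.1 hβ0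
  set y := (B : ℝ)⁻¹ with hy
  have hyβ : |y| = β⁻¹ := by rw [hy, abs_inv]
  have hy2 : |y| ≤ 1 / 2 := by
    rw [hyβ, inv_le_comm₀ hβ0 (by norm_num)]
    norm_num
    linarith
  have hBy : (B : ℝ) * y = 1 := mul_inv_cancel₀ hB0
  have hQ := abs_sum_mul_pow_bounds (v := fun j => (v j : ℝ)) (B := B) (k := k) hV1 (by linarith) hvV
    (by exact_mod_cast Int.one_le_abs hvk)
  set r : ℕ → ℤ := fun n => ∑ j ∈ range (k + 1), v j * c (n + j) with hr
  have hrb : ∀ n, |(r n : ℝ)| ≤ ((k : ℝ) + 1) * V * ((n : ℝ) + k + 1) ^ γ := by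
    intro n
    simp only [hr]
    push_cast
    refine (abs_sum_le_sum_abs _ _).trans ?_
    have : ∀ j ∈ range (k + 1), |(v j : ℝ) * c (n + j)| ≤ V * ((n : ℝ) + k + 1) ^ γ := by
      intro j hj
      have hj' : j ≤ k := by simpa [Nat.lt_succ_iff] using hj
      rw [abs_mul]
      gcongr
      · exact hvV j hj'
      · refine (hc _).trans ?_
        push_cast
        gcongr
    refine (sum_le_sum this).trans ?_
    simp [mul_assoc]
  have hrb' : ∀ i ≤ 1, ∀ n : ℕ, |(r (n + k + i) : ℝ)| ≤ D * ((n : ℝ) + 1) ^ γ := by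
    intro i hi n
    refine (hrb _).trans ?_
    rw [hD, mul_assoc _ _ (((n : ℝ) + 1) ^ γ), ← mul_pow]
    gcongr
    have hi' : (i : ℝ) ≤ 1 := by exact_mod_cast hi
    push_cast
    have : 0 ≤ (n : ℝ) * k := by positivity
    have hn : 0 ≤ (n : ℝ) := by positivity
    nlinarith
  have hcs : ∀ j, Summable fun n => (c (n + j) : ℝ) * y ^ n := by
    intro j
    refine (summable_and_abs_tsum_le (γ := γ) (D := ((j : ℝ) + 1) ^ γ) hy2 fun n => ?_).1
    refine (hc _).trans ?_
    rw [← mul_pow]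
    gcongr
    push_cast
    have : 0 ≤ (n : ℝ) * j := by positivity
    nlinarith
  set F := ∑' n, (c n : ℝ) * y ^ n with hF
  have hsplit : ∀ j, (B : ℝ) ^ j * F = B * ((∑ m ∈ range j, c m * B ^ (j - 1 - m) : ℤ) : ℝ) +
      ∑' n, (c (n + j) : ℝ) * y ^ n := by
    intro j
    have h0 := (hcs 0).sum_add_tsum_nat_add j
    simp only [add_zero] at h0
    rw [hF, ← h0, mul_add, ← tsum_mul_left, mul_sum]
    push_cast
    rw [mul_sum]
    congr 1
    · refine sum_congr rfl fun m hm => ?_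
      have hm' : m < j := mem_range.1 hm
      have h1 : (B : ℝ) ^ j = B * B ^ (j - 1 - m) * B ^ m := by
        rw [← pow_succ', ← pow_add]
        congr 1
        lia
      calc (B : ℝ) ^ j * (c m * y ^ m)
          = B * (c m * B ^ (j - 1 - m)) * (B * y) ^ m := by
            rw [h1, mul_pow]; ring
        _ = _ := by rw [hBy]; simp
    · refine tsum_congr fun n => ?_
      calc (B : ℝ) ^ j * (c (n + j) * y ^ (n + j)) = c (n + j) * y ^ n * (B * y) ^ j := by
            rw [mul_pow, pow_add]; ring
        _ = _ := by rw [hBy]; simp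
  have hrsum : Summable fun n => (r n : ℝ) * y ^ n := by
    have := summable_sum (s := range (k + 1)) (fun j _ => (hcs j).mul_left (v j : ℝ))
    refine this.congr fun n => ?_
    simp only [hr]
    push_cast
    rw [sum_mul]
    exact sum_congr rfl fun _ _ => by ring
  have hε : (∑ j ∈ range (k + 1), v j * B ^ j : ℤ) * F -
      B * ((∑ j ∈ range (k + 1), v j * ∑ m ∈ range j, c m * B ^ (j - 1 - m) : ℤ) : ℝ) =
      ∑' n, (r n : ℝ) * y ^ n := by
    have h1 : ∑' n, (r n : ℝ) * y ^ n =
        ∑ j ∈ range (k + 1), (v j : ℝ) * ∑' n, (c (n + j) : ℝ) * y ^ n := by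
      simp_rw [← tsum_mul_left]
      rw [← Summable.tsum_finsetSum (fun j _ => (hcs j).mul_left (v j : ℝ))]
      refine tsum_congr fun n => ?_
      simp only [hr]
      push_cast
      rw [sum_mul]
      exact sum_congr rfl fun _ _ => by ring
    rw [h1]
    push_cast
    rw [sum_mul, mul_sum, ← sum_sub_distrib]
    refine sum_congr rfl fun j _ => ?_
    have := hsplit j
    push_cast at this
    linear_combination (v j : ℝ) * this
  have hε1 : ∑' n, (r n : ℝ) * y ^ n = y ^ k * ∑' n, (r (n + k) : ℝ) * y ^ n := by
    rw [← hrsum.sum_add_tsum_nat_add k, sum_eq_zero, zero_add, ← tsum_mul_left]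
    · exact tsum_congr fun n => by ring
    · intro n hn
      have : r n = 0 := hv n (mem_range.1 hn)
      simp [this]
  have hb0 := summable_and_abs_tsum_le (γ := γ) hy2 (hrb' 0 zero_le_one)
  have hb1 := summable_and_abs_tsum_le (γ := γ) hy2 (hrb' 1 le_rfl)
  simp only [add_zero] at hb0
  have hε2 : ∑' n, (r (n + k) : ℝ) * y ^ n =
      r k + y * ∑' n, (r (n + k + 1) : ℝ) * y ^ n := by
    rw [hb0.1.tsum_eq_zero_add, ← tsum_mul_left]
    congr 1
    · simp
    · refine tsum_congr fun n => ?_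
      rw [show n + 1 + k = n + k + 1 by ring]
      ring
  have hyk : |y ^ k| = (β ^ k)⁻¹ := by rw [abs_pow, hyβ, inv_pow]
  refine ⟨_, _, _, hε, ?_, ?_, ?_, ?_⟩
  · push_cast
    exact hQ.1
  · push_cast
    refine hQ.2.trans ?_
    gcongr
  · rw [hε1, abs_mul, hyk, hε2, div_eq_mul_inv]
    gcongr
    have hrk1 : (1 : ℝ) ≤ |(r k : ℝ)| := by exact_mod_cast Int.one_le_abs hrk
    have h6 := abs_sub_abs_le_abs_add (r k : ℝ) (y * ∑' n, (r (n + k + 1) : ℝ) * y ^ n)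
    have h7 : |y * ∑' n, (r (n + k + 1) : ℝ) * y ^ n| ≤ 1 / 2 := by
      rw [abs_mul, hyβ, inv_mul_le_iff₀ hβ0]
      linarith [hb1.2]
    linarith
  · rw [hε1, abs_mul, hyk, mul_comm]
    gcongr
    exact hb0.2.trans hDW

theorem tendsto_sum_range_pow {d : ℕ} (hd : 2 ≤ d) {f : ℕ → ℝ} (hf : Summable f) :
    Tendsto (fun T => ∑ n ∈ range (d ^ T), f n) atTop (𝓝 (∑' n, f n)) :=
  hf.hasSum.tendsto_sum_nat.comp (tendsto_pow_atTop_atTop_of_one_lt (by lia))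

theorem summable_digitProd {d : ℕ} {u : ℕ → ℤ} {γ : ℕ}
    (hc : ∀ n, |(digitProd d u n : ℝ)| ≤ ((n : ℝ) + 1) ^ γ) {x : ℝ} (hx : |x| ≤ 1 / 2) :
    Summable fun n => (digitProd d u n : ℝ) * x ^ n :=
  (summable_and_abs_tsum_le (γ := γ) (D := 1) hx (by simpa using hc)).1

theorem tsum_digitProd_eq_mul {d : ℕ} (hd : 2 ≤ d) {u : ℕ → ℤ} (hu0 : u 0 = 1) {γ : ℕ}
    (hc : ∀ n, |(digitProd d u n : ℝ)| ≤ ((n : ℝ) + 1) ^ γ) {x : ℝ} (hx : |x| ≤ 1 / 2) (T : ℕ) :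
    ∑' n, (digitProd d u n : ℝ) * x ^ n =
      (∑ n ∈ range (d ^ T), (digitProd d u n : ℝ) * x ^ n) *
        ∑' n, (digitProd d u n : ℝ) * (x ^ d ^ T) ^ n := by
  have hx' : |x ^ d ^ T| ≤ 1 / 2 := by
    rw [abs_pow]
    exact (pow_le_of_le_one (abs_nonneg x) (by linarith) (by positivity)).trans hx
  have h1 := (tendsto_sum_range_pow hd (summable_digitProd hc hx)).comp (tendsto_add_atTop_nat T)
  have h2 := (tendsto_sum_range_pow hd (summable_digitProd hc hx')).const_mul
    (∑ n ∈ range (d ^ T), (digitProd d u n : ℝ) * x ^ n)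
  refine tendsto_nhds_unique h1 (h2.congr fun S => ?_)
  simp only [Function.comp_apply]
  rw [← prod_eq_sum_digitProd hd hu0, ← prod_eq_sum_digitProd hd hu0,
    ← prod_eq_sum_digitProd hd hu0, add_comm S T, prod_range_add]
  congr 1
  refine prod_congr rfl fun t _ => ?_
  rw [← pow_mul x, ← pow_add]

theorem tprod_eq_tsum_digitProd {d : ℕ} (hd : 2 ≤ d) {u : ℕ → ℤ} (hu0 : u 0 = 1) {γ : ℕ}
    (hc : ∀ n, |(digitProd d u n : ℝ)| ≤ ((n : ℝ) + 1) ^ γ) {x : ℝ} (hx : |x| ≤ 1 / 2) :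
    ∏' t : ℕ, ∑ i ∈ range d, (u i : ℝ) * (x ^ (d ^ t)) ^ i =
      ∑' n, (digitProd d u n : ℝ) * x ^ n := by
  have hmul : Multipliable fun t : ℕ => ∑ i ∈ range d, (u i : ℝ) * (x ^ (d ^ t)) ^ i := by
    obtain ⟨e, rfl⟩ : ∃ e, d = e + 1 := ⟨d - 1, by lia⟩
    have h1 : ∀ t : ℕ, ∑ i ∈ range (e + 1), (u i : ℝ) * (x ^ ((e + 1) ^ t)) ^ i =
        1 + ∑ i ∈ range e, (u (i + 1) : ℝ) * (x ^ ((e + 1) ^ t)) ^ (i + 1) := fun t => by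
      rw [sum_range_succ']
      simp [hu0, add_comm]
    simp_rw [h1]
    refine Real.multipliable_one_add_of_summable (summable_sum fun i _ => Summable.mul_left _ ?_)
    refine Summable.of_norm_bounded (g := fun t : ℕ => (1 / 2 : ℝ) ^ t)
      (summable_geometric_of_lt_one (by norm_num) (by norm_num)) fun t => ?_
    rw [Real.norm_eq_abs, ← pow_mul, abs_pow]
    have h2 : t ≤ (e + 1) ^ t * (i + 1) :=
      (Nat.lt_pow_self (by lia)).le.trans (Nat.le_mul_of_pos_right _ (by lia))
    calc |x| ^ ((e + 1) ^ t * (i + 1)) ≤ |x| ^ t :=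
          pow_le_pow_of_le_one (abs_nonneg x) (by linarith) h2
      _ ≤ _ := by gcongr
  refine tendsto_nhds_unique (hmul.hasProd.tendsto_prod_nat)
    ((tendsto_sum_range_pow hd (summable_digitProd hc hx)).congr fun T => ?_)
  rw [prod_eq_sum_digitProd hd hu0]

/-- Two consecutive good approximations to `f` bound how well `f` can be approximated by `p / q`. -/
theorem le_abs_mul_sub_of_approximations {f Φ M W β q p : ℝ} {k : ℕ}
    (hΦ : Φ ≠ 0) (hΦM : |Φ| ≤ M) (hW : 1 ≤ W) (hβ : 4 * W ≤ β) (hq : 0 < q)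
    (hqβ : q * M * W ≤ β ^ k / 2)
    (happ : ∀ i : Fin 2, ∃ Q P ε : ℝ, Q * f - P = Φ * ε ∧ β ^ (k + i.1) / 2 ≤ |Q| ∧
      |Q| ≤ 2 * W * β ^ (k + i.1) ∧ (β ^ (k + i.1))⁻¹ / 2 ≤ |ε| ∧
      |ε| ≤ W * (β ^ (k + i.1))⁻¹ ∧ (Q * p - q * P ≠ 0 → 1 ≤ |Q * p - q * P|)) :
    1 ≤ 4 * W * β ^ (k + 1) * |q * f - p| := by
  have hβ1 : 1 ≤ β := by linarith
  have hM : 0 ≤ M := (abs_nonneg _).trans hΦM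
  choose Q P ε h1 h2 h3 h4 h5 h6 using happ
  by_cases hex : ∃ i, Q i * p - q * P i ≠ 0
  · obtain ⟨i, hi⟩ := hex
    have hki : k + i.1 ≤ k + 1 := by lia
    have hone := h6 i hi
    have heq : Q i * p - q * P i = q * (Φ * ε i) - Q i * (q * f - p) := by
      rw [← h1]; ring
    rw [heq] at hone
    have h7 := abs_sub (q * (Φ * ε i)) (Q i * (q * f - p))
    rw [abs_mul, abs_mul, abs_mul (Q i), abs_of_pos hq] at h7
    have h8 : q * (|Φ| * |ε i|) ≤ 1 / 2 := by
      have h9 : |ε i| ≤ W * (β ^ k)⁻¹ := by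
        refine (h5 i).trans ?_
        have : β ^ k ≤ β ^ (k + i.1) := pow_le_pow_right₀ hβ1 (by lia)
        gcongr
      calc q * (|Φ| * |ε i|) ≤ q * (M * (W * (β ^ k)⁻¹)) := by gcongr
        _ = q * M * W / β ^ k := by field_simp
        _ ≤ 1 / 2 := by
          rw [div_le_iff₀ (by positivity)]
          linarith
    have h10 : |Q i| * |q * f - p| ≤ 2 * W * β ^ (k + 1) * |q * f - p| := by
      have : β ^ (k + i.1) ≤ β ^ (k + 1) := pow_le_pow_right₀ hβ1 hki
      refine mul_le_mul_of_nonneg_right ((h3 i).trans ?_) (abs_nonneg _)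
      gcongr
    linarith
  · exfalso
    push Not at hex
    have heq : ∀ i, q * (Φ * ε i) = Q i * (q * f - p) := fun i => by
      have := hex i
      rw [← h1]
      linear_combination this
    have hcross : ε 0 * Q 1 = ε 1 * Q 0 := by
      have h7 : q * Φ * (ε 0 * Q 1) = q * Φ * (ε 1 * Q 0) := by
        linear_combination Q 1 * heq 0 - Q 0 * heq 1
      exact mul_left_cancel₀ (mul_ne_zero hq.ne' hΦ) h7
    have habs : |ε 0| * |Q 1| = |ε 1| * |Q 0| := by rw [← abs_mul, hcross, abs_mul]
    have hβk : 0 < β ^ k := by positivity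
    have a1 : β / 4 ≤ |ε 0| * |Q 1| := by
      calc β / 4 = ((β ^ k)⁻¹ / 2) * (β ^ (k + 1) / 2) := by
            rw [pow_succ]; field_simp; norm_num
        _ ≤ _ := by
          gcongr
          · exact h4 0
          · exact h2 1
    have a2 : |ε 1| * |Q 0| ≤ 2 * W ^ 2 / β := by
      calc |ε 1| * |Q 0| ≤ (W * (β ^ (k + 1))⁻¹) * (2 * W * β ^ k) := by
            gcongr
            · exact h5 1
            · exact h3 0
        _ = _ := by rw [pow_succ]; field_simp
    have a3 : β / 4 ≤ 2 * W ^ 2 / β := by linarith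
    rw [div_le_div_iff₀ (by norm_num) (by linarith)] at a3
    nlinarith

theorem le_abs_mul_sub_tsum_digitProd {d : ℕ} (hd : 2 ≤ d) {u : ℕ → ℤ} (hu0 : u 0 = 1) {γ : ℕ}
    (hc : ∀ n, |(digitProd d u n : ℝ)| ≤ ((n : ℝ) + 1) ^ γ)
    (hH : ∀ n : ℕ,
      (Matrix.of fun i j : Fin n => ((digitProd d u (i.1 + j.1) : ℤ) : ℚ)).det ≠ 0)
    {b : ℤ} (hb : 2 ≤ |b|) {S : ℝ} (hS : S = ∑' n : ℕ, ((n : ℝ) + 1) ^ γ * (1 / 2) ^ n)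
    {f : ℝ} (hf : f = ∑' n, (digitProd d u n : ℝ) * ((b : ℝ)⁻¹) ^ n) (hf0 : f ≠ 0)
    {k T : ℕ} (hk : 0 < k) {W β : ℝ} (hβ : β = |(b : ℝ)| ^ d ^ T)
    (hW : S * (2 * (k : ℝ) + 4) ^ ((γ + 1) * (k + 2)) ≤ W) (hWβ : 4 * W ≤ β)
    {p q : ℤ} (hq : 0 < q) (hqβ : q * S * W ≤ β ^ k / 2) :
    1 ≤ 4 * W * β ^ (k + 1) * |q * f - p| := by
  have hS1 : 1 ≤ S := hS ▸ one_le_tsum_add_one_pow_mul_geometric γ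
  have hk0 : (0 : ℝ) ≤ k := Nat.cast_nonneg k
  have hW1 : 1 ≤ W := by
    have : (1 : ℝ) ≤ (2 * (k : ℝ) + 4) ^ ((γ + 1) * (k + 2)) := one_le_pow₀ (by linarith)
    nlinarith
  have hb' : (2 : ℝ) ≤ |(b : ℝ)| := by exact_mod_cast hb
  have hb0 : (b : ℝ) ≠ 0 := abs_pos.1 (by linarith)
  have hx : |(b : ℝ)⁻¹| ≤ 1 / 2 := by
    rw [abs_inv, inv_le_comm₀ (by linarith) (by norm_num)]
    norm_num
    exact hb'
  have hfΦ := tsum_digitProd_eq_mul hd hu0 hc hx T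
  rw [← hf] at hfΦ
  set Φ := ∑ n ∈ range (d ^ T), (digitProd d u n : ℝ) * ((b : ℝ)⁻¹) ^ n with hΦ
  have hΦ0 : Φ ≠ 0 := by
    rintro h
    rw [h, zero_mul] at hfΦ
    exact hf0 hfΦ
  have hΦS : |Φ| ≤ S := by
    refine (abs_sum_le_sum_abs _ _).trans ?_
    rw [hS]
    refine le_trans ?_ ((summable_add_one_pow_mul_geometric γ).sum_le_tsum (range (d ^ T))
      (fun _ _ => by positivity))
    refine sum_le_sum fun n _ => ?_
    rw [abs_mul, abs_pow]
    gcongr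
    exact hc n
  have hΦB : Φ * (b : ℝ) ^ d ^ T =
      ((∑ n ∈ range (d ^ T), digitProd d u n * b ^ (d ^ T - n) : ℤ) : ℝ) := by
    push_cast
    rw [hΦ, sum_mul]
    refine sum_congr rfl fun n hn => ?_
    rw [inv_pow, mul_assoc, pow_sub₀ _ hb0 (mem_range.1 hn).le]
    ring
  set A : ℤ := ∑ n ∈ range (d ^ T), digitProd d u n * b ^ (d ^ T - n)
  have hB : |((b ^ d ^ T : ℤ) : ℝ)| = β := by
    rw [hβ]
    push_cast
    exact abs_pow _ _
  refine le_abs_mul_sub_of_approximations hΦ0 hΦS hW1 hWβ (by exact_mod_cast hq) hqβ fun i => ?_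
  have hi : (i.1 : ℝ) ≤ 1 := by exact_mod_cast Nat.lt_succ_iff.1 i.2
  obtain ⟨Q, P, ε, h1, h2, h3, h4, h5⟩ := exists_pade_value hc hH (k := k + i.1) (by lia) (W := W)
    (B := b ^ d ^ T) (by
      rw [← hS]
      refine le_trans ?_ hW
      gcongr ?_ * ?_
      calc (2 * ((k + i.1 : ℕ) : ℝ) + 2) ^ ((γ + 1) * (k + i.1 + 1))
          ≤ (2 * (k : ℝ) + 4) ^ ((γ + 1) * (k + i.1 + 1)) := by
            gcongr ?_ ^ _
            push_cast
            linarith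
        _ ≤ _ := by
            refine pow_le_pow_right₀ (by linarith) ?_
            exact Nat.mul_le_mul_left _ (by lia)) (by rw [hB]; exact hWβ)
  rw [hB] at h2 h3 h4 h5
  refine ⟨Q, (A * P : ℤ), ε, ?_, h2, h3, h4, h5, fun hne => ?_⟩
  · rw [← h1, hfΦ]
    push_cast
    rw [← hΦB, inv_pow]
    ring
  · have h6 : (Q : ℝ) * p - q * ((A * P : ℤ) : ℝ) = ((Q * p - q * (A * P) : ℤ) : ℝ) := by
      push_cast; ring
    rw [h6] at hne ⊢
    exact_mod_cast Int.one_le_abs (by exact_mod_cast hne)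

/-- Choice of the parameters `T` and `k` in terms of the denominator `q`. -/
theorem exists_parameters {d : ℕ} (hd : 2 ≤ d) (γ : ℕ) {S a : ℝ} (hS : 1 ≤ S) (ha : 2 ≤ a) :
    ∃ K : ℝ, 0 < K ∧ ∀ᶠ q : ℕ in atTop, ∃ T k : ℕ, 0 < k ∧
      4 * (S * (2 * (k : ℝ) + 4) ^ ((γ + 1) * (k + 2))) ≤ a ^ d ^ T ∧
      q * S * (S * (2 * (k : ℝ) + 4) ^ ((γ + 1) * (k + 2))) ≤ (a ^ d ^ T) ^ k / 2 ∧
      4 * (S * (2 * (k : ℝ) + 4) ^ ((γ + 1) * (k + 2))) * (a ^ d ^ T) ^ (k + 1) ≤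
        q * Real.exp (K * Real.sqrt (Real.log q * Real.log (Real.log q))) := by
  have hloga : 1 / 2 ≤ Real.log a := by
    have := Real.log_two_gt_d9
    have h2 := Real.log_le_log (by norm_num) ha
    linarith
  set R : ℝ := 4 * (γ + 1) + 2 with hR
  have hR2 : 2 ≤ R := by rw [hR]; have := Nat.cast_nonneg (α := ℝ) γ; linarith
  have hd0 : (2 : ℝ) ≤ d := by exact_mod_cast hd
  have ha0 : 0 < a := by linarith
  refine ⟨4 * d * R * Real.log a, by positivity, ?_⟩
  have hlogq : Tendsto (fun q : ℕ => Real.log q) atTop atTop :=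
    Real.tendsto_log_atTop.comp tendsto_natCast_atTop_atTop
  have e1 := hlogq.eventually_ge_atTop (Real.log (4 * S ^ 2) ^ 2 + 16)
  have e2 := hlogq.eventually (Real.tendsto_log_atTop.eventually_ge_atTop 1)
  have e3 := hlogq.eventually (Real.isLittleO_log_id_atTop.bound (by norm_num : (0 : ℝ) < 1 / 16))
  filter_upwards [e1, e2, e3, eventually_ge_atTop 1] with q h1 h2 h3 hq1
  have hq0 : (0 : ℝ) < q := by exact_mod_cast hq1
  have hqL : (q : ℝ) = Real.exp (Real.log q) := (Real.exp_log hq0).symm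
  generalize Real.log (q : ℝ) = L at *
  set s := Real.sqrt (L * Real.log L) with hs
  have hL16 : 16 ≤ L := by nlinarith [sq_nonneg (Real.log (4 * S ^ 2))]
  have h3' : 16 * Real.log L ≤ L := by
    simp only [id, Real.norm_eq_abs] at h3
    rw [abs_of_nonneg (by linarith), abs_of_nonneg (by linarith)] at h3
    linarith
  have hs2 : s ^ 2 = L * Real.log L := Real.sq_sqrt (by positivity)
  have hs0 : 0 ≤ s := Real.sqrt_nonneg _
  have hsL : L ≤ s ^ 2 := by rw [hs2]; nlinarith
  have hs4 : 4 ≤ s := by nlinarith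
  have hsS : Real.log (4 * S ^ 2) ≤ s := by
    refine le_of_sq_le_sq ?_ hs0
    linarith
  have hLs : 4 * s ≤ L := by
    refine le_of_sq_le_sq ?_ (by linarith)
    nlinarith
  obtain ⟨t, ht1, ht2⟩ := exists_nat_pow_near (x := R * s) (y := (d : ℝ)) (by nlinarith)
    (by linarith)
  set β := a ^ d ^ (t + 1) with hβ
  have hlogβ : Real.log β = d ^ (t + 1) * Real.log a := by
    rw [hβ, Real.log_pow]
    push_cast
    rfl
  have hβlow : R * s / 2 ≤ Real.log β := by
    rw [hlogβ]
    calc R * s / 2 = R * s * (1 / 2) := by ring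
      _ ≤ _ := by gcongr
  have hβs : s ≤ Real.log β := by nlinarith
  have hβhigh : Real.log β ≤ d * R * s * Real.log a := by
    rw [hlogβ, pow_succ']
    have : (d : ℝ) * d ^ t ≤ d * R * s := by nlinarith
    gcongr
  have hβ0 : 0 < β := by positivity
  have hβ1 : 1 < β := (Real.log_pos_iff hβ0.le).1 (by linarith)
  obtain ⟨n, hn1, hn2⟩ := exists_nat_pow_near (x := (q : ℝ)) (y := β) (by exact_mod_cast hq1) hβ1
  have hnL : n * s ≤ L := by
    have := Real.log_le_log (by positivity) hn1
    rw [Real.log_pow, hqL, Real.log_exp] at this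
    exact (mul_le_mul_of_nonneg_left hβs (Nat.cast_nonneg n)).trans this
  set W := S * (2 * ((n + 2 : ℕ) : ℝ) + 4) ^ ((γ + 1) * (n + 2 + 2)) with hW
  have hW0 : 0 < W := by positivity
  have hbase : (2 * ((n + 2 : ℕ) : ℝ) + 4) ≤ L := by
    have h4 : (n : ℝ) * 4 ≤ n * s := by gcongr
    push_cast
    linarith
  have hWβ : 4 * S * W ≤ β := by
    rw [← Real.log_le_log_iff (by positivity) hβ0]
    have e : 4 * S * W = 4 * S ^ 2 * (2 * ((n + 2 : ℕ) : ℝ) + 4) ^ ((γ + 1) * (n + 2 + 2)) := by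
      rw [hW]; ring
    rw [e, Real.log_mul (by positivity) (by positivity), Real.log_pow]
    have h4 : Real.log (2 * ((n + 2 : ℕ) : ℝ) + 4) ≤ Real.log L :=
      Real.log_le_log (by positivity) hbase
    have h5 : ((n : ℝ) + 4) * Real.log L ≤ 2 * s := by
      have h6 : ((n : ℝ) + 4) * s ≤ 2 * L := by linarith
      have h7 : (((n : ℝ) + 4) * Real.log L) * s ≤ (2 * s) * s := by
        calc (((n : ℝ) + 4) * Real.log L) * s = (((n : ℝ) + 4) * s) * Real.log L := by ring
          _ ≤ (2 * L) * Real.log L := by gcongr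
          _ = 2 * s ^ 2 := by rw [hs2]; ring
          _ = _ := by ring
      exact le_of_mul_le_mul_right h7 (by linarith)
    have h8 : (((γ + 1) * (n + 2 + 2) : ℕ) : ℝ) * Real.log (2 * ((n + 2 : ℕ) : ℝ) + 4) ≤
        (γ + 1) * (2 * s) := by
      calc _ ≤ (((γ + 1) * (n + 2 + 2) : ℕ) : ℝ) * Real.log L := by gcongr
        _ = ((γ : ℝ) + 1) * (((n : ℝ) + 4) * Real.log L) := by push_cast; ring
        _ ≤ _ := by gcongr
    have h9 : R * s / 2 = (γ + 1) * (2 * s) + s := by rw [hR]; ring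
    linarith
  have hWβ' : 4 * W ≤ β := by
    refine le_trans ?_ hWβ
    gcongr
    linarith
  refine ⟨t + 1, n + 2, by lia, hWβ', ?_, ?_⟩
  · calc q * S * W = q * (4 * S * W) / 4 := by ring
      _ ≤ β ^ (n + 1) * β / 4 := by gcongr
      _ = β ^ (n + 2) / 4 := by ring
      _ ≤ β ^ (n + 2) / 2 := by
        have : 0 < β ^ (n + 2) := by positivity
        linarith
  · calc 4 * W * β ^ (n + 2 + 1) ≤ β * β ^ (n + 2 + 1) := by gcongr
      _ = β ^ n * β ^ 4 := by ring
      _ ≤ q * β ^ 4 := by gcongr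
      _ ≤ _ := by
        gcongr
        rw [← Real.log_le_iff_le_exp (by positivity), Real.log_pow]
        push_cast
        linarith

theorem finite_setOf_rat_den_lt_abs_sub_lt (x : ℝ) (N : ℕ) :
    {r : ℚ | r.den < N ∧ |x - r| < 1}.Finite := by
  obtain ⟨M, hM⟩ := exists_nat_ge ((|x| + 1) * N)
  refine Set.Finite.of_finite_image (f := fun r : ℚ => (r.num, r.den))
    (((Set.finite_Icc (-(M : ℤ)) M).prod (Set.finite_Iio N)).subset ?_) ?_
  · rintro _ ⟨r, ⟨hr1, hr2⟩, rfl⟩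
    refine ⟨?_, hr1⟩
    have hden : (0 : ℝ) < r.den := by exact_mod_cast r.pos
    have h1 : (r : ℝ) * r.den = r.num := by exact_mod_cast Rat.mul_den_eq_num r
    have h2 : |(r : ℝ)| ≤ |x| + 1 := by
      have := abs_sub_abs_le_abs_sub (r : ℝ) x
      rw [abs_sub_comm] at this
      linarith
    have h3 : |(r.num : ℝ)| ≤ M := by
      rw [← h1, abs_mul, abs_of_pos hden]
      refine le_trans ?_ hM
      gcongr
    have h4 : |r.num| ≤ (M : ℤ) := by exact_mod_cast h3
    exact abs_le.1 h4
  · intro r _ r' _ h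
    simp only [Prod.mk.injEq] at h
    exact Rat.ext h.1 h.2

/-- (Main theorem.)  Let `d ≥ 2` and `f(z) = ∏_{t=0}^∞ P(z^{-d^t})` with
`P(z) = 1 + u_1 z + ⋯ + u_{d-1}z^{d-1} ∈ ℤ[z]` (so `P(0) = 1`, `deg P < d`), such that the
Laurent series `f` is badly approximable — all partial quotients of the continued fraction
of `f` over `ℚ((z^{-1}))` have degree `1`, which (as in the paper) is equivalent to all
Hankel determinants of the coefficient sequence `c_n` of `g(z) = z^{-1}f(z)` being nonzero,
where `c_n = ∏ u_{digit}` over the base-`d` digits of `n-1`.  Then for any integer `b` with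
`|b| ≥ 2`, either `f(b) = 0` or there is `K > 0` such that
`|f(b) - p/q| < q^{-2} exp(-K √(log q · log log q))` has only finitely many rational
solutions `p/q`. -/
theorem mahler_value_badly_approximable
    (d : ℕ) (hd : 2 ≤ d) (u : ℕ → ℤ) (hu0 : u 0 = 1) (hud : ∀ i, d ≤ i → u i = 0)
    (hH : ∀ n : ℕ,
      (Matrix.of fun i j : Fin n =>
        ((((Nat.digits d (i.1 + j.1)).map u).prod : ℤ) : ℚ)).det ≠ 0)
    (b : ℤ) (hb : 2 ≤ |b|)
    (fb : ℝ)
    (hfb : fb = ∏' t : ℕ, ∑ i ∈ Finset.range d, (u i : ℝ) * (((b : ℝ))⁻¹ ^ (d ^ t)) ^ i) :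
    fb = 0 ∨
    ∃ K : ℝ, 0 < K ∧
      {r : ℚ | |fb - (r : ℝ)| <
        Real.exp (-K * Real.sqrt (Real.log r.den * Real.log (Real.log r.den))) /
          (r.den : ℝ) ^ 2}.Finite := by
  have hx : |(b : ℝ)⁻¹| ≤ 1 / 2 := by
    have hb' : (2 : ℝ) ≤ |(b : ℝ)| := by exact_mod_cast hb
    rw [abs_inv, inv_le_comm₀ (by linarith) (by norm_num)]
    norm_num
    exact hb'
  obtain ⟨γ, hγ⟩ := exists_abs_digitProd_le hd hu0
  rw [tprod_eq_tsum_digitProd hd hu0 hγ hx] at hfb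
  refine or_iff_not_imp_left.2 fun hf0 => ?_
  set S := ∑' n : ℕ, ((n : ℝ) + 1) ^ γ * (1 / 2) ^ n with hS
  have hS1 : 1 ≤ S := one_le_tsum_add_one_pow_mul_geometric γ
  obtain ⟨K, hK, hev⟩ := exists_parameters hd γ hS1 (a := |(b : ℝ)|) (by exact_mod_cast hb)
  obtain ⟨N, hN⟩ := eventually_atTop.1 hev
  refine ⟨K, hK, (finite_setOf_rat_den_lt_abs_sub_lt fb N).subset fun r hr => ?_⟩
  have hden : (0 : ℝ) < r.den := by exact_mod_cast r.pos
  simp only [Set.mem_ofPred_eq] at hr ⊢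
  set s := Real.sqrt (Real.log r.den * Real.log (Real.log r.den)) with hs
  have hs0 : 0 ≤ s := Real.sqrt_nonneg _
  constructor
  · by_contra! hNr
    obtain ⟨T, k, hk, h1, h2, h3⟩ := hN _ hNr
    have key := le_abs_mul_sub_tsum_digitProd hd hu0 hγ hH hb hS hfb hf0 hk rfl le_rfl h1
      (p := r.num) (q := r.den) (by exact_mod_cast r.pos) (by exact_mod_cast h2)
    have h4 : (((r.den : ℤ) : ℝ) * fb - r.num) = r.den * (fb - r) := by
      have h5 : (r : ℝ) * r.den = r.num := by exact_mod_cast Rat.mul_den_eq_num r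
      rw [← h5]
      push_cast
      ring
    rw [h4, abs_mul, abs_of_pos hden] at key
    refine absurd key (not_le.2 ?_)
    calc _ ≤ (r.den * Real.exp (K * s)) * (r.den * |fb - r|) := by gcongr
      _ < (r.den * Real.exp (K * s)) * (r.den * (Real.exp (-K * s) / (r.den : ℝ) ^ 2)) := by
        gcongr
      _ = Real.exp (K * s) * Real.exp (-K * s) := by field_simp
      _ = 1 := by rw [← Real.exp_add]; simp
  · refine hr.trans_le ?_
    rw [div_le_one (by positivity)]
    have h1 : Real.exp (-K * s) ≤ 1 := Real.exp_le_one_iff.2 (by nlinarith)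
    have h2 : (1 : ℝ) ≤ (r.den : ℝ) ^ 2 := one_le_pow₀ (by exact_mod_cast r.pos)
    linarith
end
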